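/- Let u and v be permutations whose Schubert polynomials lie in ℤ[x_1,…,x_n], and define coefficients c_{u,v}^a (for weak compositions a of length n) by the expansion 𝔖_u · 𝔖_v = Σ_a c_{u,v}^a 𝔉_a in the fundamental slide basis. Then c_{u,v}^a = Σ_{(P,Q) ∈ QPD(u) × QPD(v)} [a | wt(P) ⧢ wt(Q)], where [a | wt(P) ⧢ wt(Q)] is the multiplicity of a in the slide product of the weights. -/

import Mathlib

open scoped Classical

namespace SlidePaper

/-- Sum of the first `i` entries of a weak composition of length `n`. -/
def psum {n : ℕ} (a : Fin n → ℕ) (i : ℕ) : ℕ :=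
  ∑ j ∈ Finset.univ.filter (fun j : Fin n => (j : ℕ) < i), a j

/-- `b` dominates `a`: all partial sums of `b` are at least those of `a`. -/
def Dominates {n : ℕ} (b a : Fin n → ℕ) : Prop :=
  ∀ i : Fin (n + 1), psum a i ≤ psum b i

/-- The flattening of a weak composition: the list of its nonzero entries in order. -/
def flat {n : ℕ} (a : Fin n → ℕ) : List ℕ :=
  (List.ofFn a).filter (fun x => x ≠ 0)

/-- `β` refines `α`: `β` splits into consecutive blocks with sums `α₁, α₂, …`. -/
def Refines (β α : List ℕ) : Prop :=
  ∃ L : List (List ℕ), L.flatten = β ∧ L.map List.sum = α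

/-- All weak compositions of length `n` with entries at most `k`. -/
def wcFinset (n k : ℕ) : Finset (Fin n → ℕ) :=
  Fintype.piFinset fun _ => Finset.range (k + 1)

/-- The monomial slide polynomial `𝔐_a`. -/
noncomputable def slideM {n : ℕ} (a : Fin n → ℕ) : MvPolynomial (Fin n) ℤ :=
  ∑ b ∈ (wcFinset n (∑ i, a i)).filter (fun b => Dominates b a ∧ flat b = flat a),
    MvPolynomial.monomial (Finsupp.equivFunOnFinite.symm b) 1

/-- The fundamental slide polynomial `𝔉_a`. -/
noncomputable def slideF {n : ℕ} (a : Fin n → ℕ) : MvPolynomial (Fin n) ℤ :=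
  ∑ b ∈ (wcFinset n (∑ i, a i)).filter (fun b => Dominates b a ∧ Refines (flat b) (flat a)),
    MvPolynomial.monomial (Finsupp.equivFunOnFinite.symm b) 1

/-- A weak composition is quasi-flat if its nonzero entries occupy consecutive positions. -/
def QuasiFlat {n : ℕ} (a : Fin n → ℕ) : Prop :=
  ∀ i j l : Fin n, i ≤ j → j ≤ l → a i ≠ 0 → a l ≠ 0 → a j ≠ 0

/-- `b` strongly dominates `a`. -/
def StronglyDominates {n : ℕ} (b a : Fin n → ℕ) : Prop :=
  Dominates b a ∧ ∀ c : Fin n → ℕ, Dominates c a → flat c = flat b → Dominates c b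

/-- The exponent vector placing the parts of `α` at the positions `i`. -/
noncomputable def placeExp {n : ℕ} (α : List ℕ) (i : Fin α.length → Fin n) : Fin n →₀ ℕ :=
  ∑ t : Fin α.length, Finsupp.single (i t) (α.get t)

/-- `f` is quasisymmetric in the variables `x_1, …, x_k` (0-indexed: `x_0, …, x_{k-1}`). -/
def IsQuasisymmetricIn {n : ℕ} (k : ℕ) (f : MvPolynomial (Fin n) ℤ) : Prop :=
  ∀ α : List ℕ, (∀ x ∈ α, 0 < x) →
    ∀ i j : Fin α.length → Fin n, StrictMono i → StrictMono j →
      (∀ t, (i t : ℕ) < k) → (∀ t, (j t : ℕ) < k) →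
      MvPolynomial.coeff (placeExp α i) f = MvPolynomial.coeff (placeExp α j) f

/-- The monomial quasisymmetric polynomial `M_α(x_1, …, x_k)` inside `ℤ[x_1, …, x_n]`. -/
noncomputable def Mqs (n k : ℕ) (α : List ℕ) : MvPolynomial (Fin n) ℤ :=
  ∑ i ∈ (Finset.univ : Finset (Fin α.length → Fin n)).filter
      (fun i : Fin α.length → Fin n => StrictMono i ∧ ∀ t, (i t : ℕ) < k),
    ∏ t : Fin α.length, (MvPolynomial.X (i t) : MvPolynomial (Fin n) ℤ) ^ α.get t

/-- The fundamental quasisymmetric polynomial `F_α(x_1, …, x_k)` inside `ℤ[x_1, …, x_n]`. -/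
noncomputable def Fqs (n k : ℕ) (α : List ℕ) : MvPolynomial (Fin n) ℤ :=
  ∑ c ∈ (Finset.univ : Finset (Composition α.sum)).filter
      (fun c => Refines c.blocks α ∧ c.blocks.length ≤ k),
    Mqs n k c.blocks

/-- Place the weak composition `a` (of length `N`) at offset `k` inside length `M`. -/
def shiftComp {N : ℕ} (k M : ℕ) (a : Fin N → ℕ) : Fin M → ℕ :=
  fun i => if h : k ≤ (i : ℕ) ∧ (i : ℕ) - k < N then a ⟨(i : ℕ) - k, h.2⟩ else 0

/-- Spread the values `g` to positions `ι` inside a weak composition of length `n`. -/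
def spread {l n : ℕ} (ι : Fin l → Fin n) (g : Fin l → ℕ) : Fin n → ℕ :=
  fun i => ∑ k, if ι k = i then g k else 0

/-- The monomial quasisymmetric function `M_α` in infinitely many variables. -/
noncomputable def MqsFun (α : List ℕ) : MvPowerSeries ℕ ℤ :=
  fun d => if ∃ i : Fin α.length → ℕ, StrictMono i ∧
      d = ∑ t : Fin α.length, Finsupp.single (i t) (α.get t) then 1 else 0

/-- The fundamental quasisymmetric function `F_α` in infinitely many variables. -/
noncomputable def FqsFun (α : List ℕ) : MvPowerSeries ℕ ℤ :=
  ∑ c ∈ (Finset.univ : Finset (Composition α.sum)).filter (fun c => Refines c.blocks α),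
    MqsFun c.blocks

/-- The cells of the Young diagram of `lam` (French notation): row `r` (from the
bottom, 0-indexed) has `lam.get r` cells. -/
abbrev Cells (lam : List ℕ) := Σ r : Fin lam.length, Fin (lam.get r)

/-- A filling of `lam` with entries in `{1, …, n}` (encoded as `Fin n`) is a semistandard
Young tableau: rows weakly increase left to right, columns strictly increase bottom to top. -/
def IsSSYT {n : ℕ} {lam : List ℕ} (T : Cells lam → Fin n) : Prop :=
  (∀ (r : Fin lam.length) (c c' : Fin (lam.get r)), c ≤ c' → T ⟨r, c⟩ ≤ T ⟨r, c'⟩) ∧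
  (∀ (r r' : Fin lam.length) (c' : Fin (lam.get r')) (h : (c' : ℕ) < lam.get r),
      (r : ℕ) < (r' : ℕ) → T ⟨r, ⟨c', h⟩⟩ < T ⟨r', c'⟩)

/-- The weight of a filling: the `v`-th entry counts the occurrences of the value `v`. -/
def wtT {n : ℕ} {lam : List ℕ} (T : Cells lam → Fin n) : Fin n → ℕ :=
  fun v => (Finset.univ.filter (fun x : Cells lam => T x = v)).card

/-- A filling is quasi-Yamanouchi if for every value `v > 1`, the leftmost occurrence of `v`
lies weakly left of some occurrence of `v - 1`. -/
def IsQY {n : ℕ} {lam : List ℕ} (T : Cells lam → Fin n) : Prop :=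
  ∀ (v : Fin n) (x : Cells lam), T x = v → 0 < (v : ℕ) →
    (∀ y : Cells lam, T y = v → (x.2 : ℕ) ≤ (y.2 : ℕ)) →
    ∃ z : Cells lam, (T z : ℕ) + 1 = (v : ℕ) ∧ (x.2 : ℕ) ≤ (z.2 : ℕ)

/-- The Schur polynomial `s_lam(x_1, …, x_n)` as the generating function of
semistandard Young tableaux. -/
noncomputable def schurPoly (n : ℕ) (lam : List ℕ) : MvPolynomial (Fin n) ℤ :=
  ∑ T ∈ (Finset.univ : Finset (Cells lam → Fin n)).filter (fun T => IsSSYT T),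
    MvPolynomial.monomial (Finsupp.equivFunOnFinite.symm (wtT T)) 1

/-- One destandardization step on fillings: for some value `v` occurring in `T` whose
leftmost occurrence is strictly right of every occurrence of `v - 1`, every `v` is
decremented to `v - 1`. -/
def TabStep {n : ℕ} {lam : List ℕ} (T T' : Cells lam → Fin n) : Prop :=
  ∃ v : Fin n, 0 < (v : ℕ) ∧ (∃ x, T x = v) ∧
    (∀ x y : Cells lam, T x = v → (T y : ℕ) + 1 = (v : ℕ) → (y.2 : ℕ) < (x.2 : ℕ)) ∧
    ∀ x : Cells lam, (T' x : ℕ) = if T x = v then (v : ℕ) - 1 else (T x : ℕ)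

/-- The reading word of a set of crosses: rows are read from top to bottom, each row from
left to right, the cross in (0-indexed) row `i` and column `j` recording the letter `i + j`
(representing the simple transposition swapping `i + j` and `i + j + 1` of `{0, 1, 2, …}`). -/
def readWord (P : Finset (ℕ × ℕ)) : List ℕ :=
  ((List.range (P.sup Prod.fst + 1)).reverse).flatMap
    (fun i => ((List.range (P.sup Prod.snd + 1)).filter (fun j => decide ((i, j) ∈ P))).map
      (fun j => i + j))

/-- The permutation `s_{i_ℓ} ⋯ s_{i_1}` associated to the word `(i_1, …, i_ℓ)`,
where `s_k` swaps `k` and `k + 1`. -/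
def wordPerm (l : List ℕ) : Equiv.Perm ℕ :=
  ((l.map (fun k => Equiv.swap k (k + 1))).reverse).prod

/-- A word is reduced if no shorter word has the same product. -/
def IsReducedWord (l : List ℕ) : Prop :=
  ∀ l' : List ℕ, wordPerm l' = wordPerm l → l.length ≤ l'.length

/-- `P` is a reduced pipe dream of shape `w`: the pipes trace out `w` and no two pipes
cross more than once, equivalently the reading word of `P` is a reduced word for `w`. -/
def IsPD (w : Equiv.Perm ℕ) (P : Finset (ℕ × ℕ)) : Prop :=
  wordPerm (readWord P) = w ∧ IsReducedWord (readWord P)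

/-- `P` is a quasi-Yamanouchi pipe dream of shape `w`: for every row, the westernmost cross
is in the first column or lies weakly west of some cross in the row above. -/
def IsQPD (w : Equiv.Perm ℕ) (P : Finset (ℕ × ℕ)) : Prop :=
  IsPD w P ∧ ∀ i j : ℕ, (i, j) ∈ P → (∀ j', (i, j') ∈ P → j ≤ j') →
    (j = 0 ∨ ∃ j', (i + 1, j') ∈ P ∧ j ≤ j')

/-- One destandardization step on pipe dreams: a row with no cross in the first column,
all of whose crosses lie strictly east of every cross in the row above, has all its
crosses moved one step northwest. -/
def PDStep (P P' : Finset (ℕ × ℕ)) : Prop :=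
  ∃ r : ℕ, (∃ j, (r, j) ∈ P) ∧ (r, 0) ∉ P ∧
    (∀ j j', (r, j) ∈ P → (r + 1, j') ∈ P → j' < j) ∧
    P' = P.filter (fun p => p.1 ≠ r) ∪
      (P.filter (fun p => p.1 = r)).image (fun p => (r + 1, p.2 - 1))

/-- The number of crosses of `P` in (0-indexed) row `i`. -/
def rowWt (P : Finset (ℕ × ℕ)) (i : ℕ) : ℕ := (P.filter (fun p => p.1 = i)).card

/-- The weight of a pipe dream, as a weak composition of length `n`. -/
def wtFin (n : ℕ) (P : Finset (ℕ × ℕ)) : Fin n → ℕ := fun i => rowWt P (i : ℕ)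

/-- The flattened weight of a pipe dream: the list of nonzero row counts, bottom row first. -/
def flatWt (P : Finset (ℕ × ℕ)) : List ℕ :=
  ((List.range (P.sup Prod.fst + 1)).map (rowWt P)).filter (fun x => x ≠ 0)

/-- The Schubert polynomial of `w` in the variables `x_1, …, x_n`, as the generating
function of reduced pipe dreams of shape `w`. -/
noncomputable def SchubertPoly (n : ℕ) (w : Equiv.Perm ℕ) : MvPolynomial (Fin n) ℤ :=
  ∑ᶠ P ∈ {P : Finset (ℕ × ℕ) | IsPD w P},
    MvPolynomial.monomial (Finsupp.equivFunOnFinite.symm (wtFin n P)) 1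

/-- The Lehmer code of `w` (0-indexed): `lehmer w i` counts `j > i` with `w j < w i`. -/
noncomputable def lehmer (w : Equiv.Perm ℕ) (i : ℕ) : ℕ :=
  Set.ncard {j : ℕ | i < j ∧ w j < w i}

/-- The Lehmer code of `w` as a weak composition of length `n`. -/
noncomputable def lehmerFin (n : ℕ) (w : Equiv.Perm ℕ) : Fin n → ℕ :=
  fun i => lehmer w (i : ℕ)

/-- The number of inversions of `w`. -/
noncomputable def invCount (w : Equiv.Perm ℕ) : ℕ :=
  Set.ncard {p : ℕ × ℕ | p.1 < p.2 ∧ w p.2 < w p.1}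

/-- The largest entry of the Lehmer code of `w`. -/
noncomputable def maxLehmer (w : Equiv.Perm ℕ) : ℕ :=
  sSup (Set.range (lehmer w))

/-- The (0-indexed) position of the first descent of `w`. -/
noncomputable def firstDescent (w : Equiv.Perm ℕ) : ℕ :=
  sInf {i : ℕ | w (i + 1) < w i}

/-- `δ(w) = 1` if every position attaining `max(L(w))` is at or before the first descent,
and `δ(w) = 0` otherwise. -/
noncomputable def delta (w : Equiv.Perm ℕ) : ℤ :=
  if ∀ i : ℕ, lehmer w i = maxLehmer w → i ≤ firstDescent w then 1 else 0

/-- `η(w) = inv(w) − max(L(w)) + δ(w) − min{i : w_i > w_{i+1}}`. -/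
noncomputable def eta (w : Equiv.Perm ℕ) : ℤ :=
  (invCount w : ℤ) - (maxLehmer w : ℤ) + delta w - ((firstDescent w : ℤ) + 1)

/-- The decomposition of a list into maximal strictly increasing runs. -/
def runsStrict : List ℕ → List (List ℕ)
  | [] => []
  | x :: rest =>
    match runsStrict rest, rest with
    | r :: rs, y :: _ => if x < y then (x :: r) :: rs else [x] :: r :: rs
    | _, _ => [[x]]

/-- The descent composition of a word: lengths of its maximal increasing runs, a new run
beginning whenever a letter is followed by a weakly smaller letter. -/
def desStrict (l : List ℕ) : List ℕ := (runsStrict l).map List.length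

/-- The decomposition of a list into maximal weakly increasing runs. -/
def runsWeak : List ℕ → List (List ℕ)
  | [] => []
  | x :: rest =>
    match runsWeak rest, rest with
    | r :: rs, y :: _ => if x ≤ y then (x :: r) :: rs else [x] :: r :: rs
    | _, _ => [[x]]

/-- The descent composition of a word: the lengths of its maximal weakly increasing runs. -/
def desComp (l : List ℕ) : List ℕ := (runsWeak l).map List.length

/-- The permutation `1^m × w`, fixing `0, …, m-1` and acting by `w` shifted by `m` above. -/
def shiftPerm (m : ℕ) (w : Equiv.Perm ℕ) : Equiv.Perm ℕ where
  toFun i := if i < m then i else w (i - m) + m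
  invFun i := if i < m then i else w.symm (i - m) + m
  left_inv i := by
    dsimp only
    by_cases h : i < m
    · simp [h]
    · have h2 : ¬ (w (i - m) + m < m) := by omega
      rw [if_neg h, if_neg h2, Nat.add_sub_cancel, Equiv.symm_apply_apply]
      omega
  right_inv i := by
    dsimp only
    by_cases h : i < m
    · simp [h]
    · have h2 : ¬ (w.symm (i - m) + m < m) := by omega
      rw [if_neg h, if_neg h2, Nat.add_sub_cancel, Equiv.apply_symm_apply]
      omega

/-- The quasi-shuffle product of two (strong) compositions, as a multiset of compositions. -/
def qShuffle : List ℕ → List ℕ → Multiset (List ℕ)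
  | [], β => {β}
  | α, [] => {α}
  | a :: α, b :: β =>
      ((qShuffle α (b :: β)).map (a :: ·)) + ((qShuffle (a :: α) β).map (b :: ·)) +
        ((qShuffle α β).map ((a + b) :: ·))
termination_by α β => α.length + β.length
decreasing_by all_goals (simp only [List.length_cons]; omega)

def shuffles : List ℕ → List ℕ → Multiset (List ℕ)
  | [], B => {B}
  | A, [] => {A}
  | x :: A, y :: B =>
      ((shuffles A (y :: B)).map (x :: ·)) + ((shuffles (x :: A) B).map (y :: ·))
termination_by A B => A.length + B.length
decreasing_by all_goals (simp only [List.length_cons]; omega)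

/-- The word `(2n-1)^{a_1} (2n-3)^{a_2} ⋯ 1^{a_n}` associated to a weak composition `a`. -/
def wordA {n : ℕ} (a : Fin n → ℕ) : List ℕ :=
  (List.ofFn (fun i : Fin n => List.replicate (a i) (2 * n - 2 * (i : ℕ) - 1))).flatten

/-- The word `(2n)^{b_1} (2n-2)^{b_2} ⋯ 2^{b_n}` associated to a weak composition `b`. -/
def wordB {n : ℕ} (b : Fin n → ℕ) : List ℕ :=
  (List.ofFn (fun i : Fin n => List.replicate (b i) (2 * n - 2 * (i : ℕ)))).flatten

/-- A list (padded with trailing zeros) dominates a weak composition of length `n`. -/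
def DominatesList {n : ℕ} (l : List ℕ) (a : Fin n → ℕ) : Prop :=
  ∀ i : Fin (n + 1), psum a (i : ℕ) ≤ ((l.take (i : ℕ)).sum)

/-- The number of letters of the `A`-word (the odd letters) in the `k`-th weakly
increasing run of `C`. -/
def runCountA (C : List ℕ) (k : Fin (runsWeak C).length) : ℕ :=
  (((runsWeak C).get k).filter (fun z => z % 2 = 1)).length

/-- The number of letters of the `B`-word (the even letters) in the `k`-th weakly
increasing run of `C`. -/
def runCountB (C : List ℕ) (k : Fin (runsWeak C).length) : ℕ :=
  (((runsWeak C).get k).filter (fun z => z % 2 = 0)).length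

/-- The length of the `k`-th weakly increasing run of `C`. -/
def runLen (C : List ℕ) (k : Fin (runsWeak C).length) : ℕ :=
  ((runsWeak C).get k).length

/-- `c = bump_{(a,b)}(C)`: the unique weak composition of length `n` obtained by inserting
zero parts into `Des(C)` so that the correspondingly placed `Des_A` and `Des_B` dominate
`a` and `b`, minimal in dominance order among all such insertions. -/
def IsBumpS {n : ℕ} (a b : Fin n → ℕ) (C : List ℕ) (c : Fin n → ℕ) : Prop :=
  ∃ ι : Fin (runsWeak C).length → Fin n, StrictMono ι ∧
    c = spread ι (runLen C) ∧
    Dominates (spread ι (runCountA C)) a ∧ Dominates (spread ι (runCountB C)) b ∧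
    ∀ ι' : Fin (runsWeak C).length → Fin n, StrictMono ι' →
      Dominates (spread ι' (runCountA C)) a → Dominates (spread ι' (runCountB C)) b →
      Dominates (spread ι' (runLen C)) c

/-- The multiplicity `[c ∣ a ⧢ b]` of `c` in the slide product of `a` and `b`: the number of
shuffles `C` of the words of `a` and `b` lying in the shuffle set `SS(a,b)` with
`bump_{(a,b)}(C) = c`. -/
noncomputable def slideMult {n : ℕ} (a b c : Fin n → ℕ) : ℕ :=
  Multiset.card ((shuffles (wordA a) (wordB b)).filter
    (fun C => DominatesList ((runsWeak C).map
        (fun r => (r.filter (fun z => z % 2 = 1)).length)) a ∧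
      DominatesList ((runsWeak C).map (fun r => (r.filter (fun z => z % 2 = 0)).length)) b ∧
      IsBumpS a b C c))

/-- Membership in the quasi-shuffle set `QSS(a,b)`: a pair `(γ_a, γ_b)` of weak compositions
of a common length at most `n` with `γ_a ≥ a`, `flat(γ_a) = flat(a)`, `γ_b ≥ b`,
`flat(γ_b) = flat(b)` (after padding with trailing zeros), and all entries of
`γ_a + γ_b` positive. -/
def InQSS {n : ℕ} (a b : Fin n → ℕ) (x : (l : ℕ) × (Fin l → ℕ) × (Fin l → ℕ)) : Prop :=
  x.1 ≤ n ∧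
  Dominates (shiftComp 0 n x.2.1) a ∧ flat x.2.1 = flat a ∧
  Dominates (shiftComp 0 n x.2.2) b ∧ flat x.2.2 = flat b ∧
  ∀ k : Fin x.1, 0 < x.2.1 k + x.2.2 k

/-- `c = bump_{(a,b)}(γ_a, γ_b)`: the unique weak composition `c` of length `n` with
`flat(c) = γ_a + γ_b` whose decomposition `c = c_a + c_b` satisfies `c_a ≥ a` and
`c_b ≥ b`, minimal in dominance order among all such compositions. -/
def IsBumpQ {n : ℕ} (a b : Fin n → ℕ) (x : (l : ℕ) × (Fin l → ℕ) × (Fin l → ℕ))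
    (c : Fin n → ℕ) : Prop :=
  ∃ ι : Fin x.1 → Fin n, StrictMono ι ∧
    c = spread ι (fun k => x.2.1 k + x.2.2 k) ∧
    Dominates (spread ι x.2.1) a ∧ Dominates (spread ι x.2.2) b ∧
    ∀ ι' : Fin x.1 → Fin n, StrictMono ι' →
      Dominates (spread ι' x.2.1) a → Dominates (spread ι' x.2.2) b →
      Dominates (spread ι' (fun k => x.2.1 k + x.2.2 k)) c

/-- The multiplicity `[c ∣ a ⧻ b]` of `c` in the quasi-slide product of `a` and `b`: the
number of pairs in the quasi-shuffle set `QSS(a,b)` whose bump is `c`. -/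
noncomputable def qsMult {n : ℕ} (a b c : Fin n → ℕ) : ℕ :=
  Nat.card {x : (l : ℕ) × (Fin l → ℕ) × (Fin l → ℕ) // InQSS a b x ∧ IsBumpQ a b x c}

/-- The Stanley symmetric function `S_w`. -/
noncomputable def StanleySym (w : Equiv.Perm ℕ) : MvPowerSeries ℕ ℤ :=
  ∑ᶠ l ∈ {l : List ℕ | wordPerm l = w ∧ IsReducedWord l}, FqsFun (desStrict l)

/-! ### Partial sums and refinement -/

section PartialSums

variable {n : ℕ}

theorem psum_zero (a : Fin n → ℕ) : psum a 0 = 0 := by simp [psum]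

theorem psum_eq_sum_take (a : Fin n → ℕ) (j : ℕ) : psum a j = ((List.ofFn a).take j).sum := by
  rw [psum, List.sum_take_ofFn]

theorem psum_succ (a : Fin n → ℕ) (j : Fin n) : psum a (j + 1) = psum a j + a j := by
  rw [psum_eq_sum_take, psum_eq_sum_take, List.sum_take_succ _ _ (by simp)]
  simp

theorem psum_length (a : Fin n → ℕ) : psum a n = ∑ j, a j := by
  rw [psum, Finset.filter_true_of_mem fun j _ => j.isLt]

theorem psum_mono (a : Fin n → ℕ) : Monotone (psum a) := fun i j hij => by
  refine Finset.sum_le_sum_of_subset fun k => ?_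
  simp only [Finset.mem_filter, Finset.mem_univ, true_and]
  omega

theorem psum_ext {a b : Fin n → ℕ} (h : ∀ j ≤ n, psum a j = psum b j) : a = b := by
  funext j
  have h₁ := psum_succ a j
  have h₂ := psum_succ b j
  rw [h _ j.isLt, h _ j.isLt.le, h₂] at h₁
  exact (Nat.add_left_cancel h₁).symm

theorem Dominates.antisymm {a b : Fin n → ℕ} (hab : Dominates a b) (hba : Dominates b a) :
    a = b :=
  psum_ext fun j hj => le_antisymm (hba ⟨j, by omega⟩) (hab ⟨j, by omega⟩)

theorem Refines.sum_eq {β α : List ℕ} (h : Refines β α) : β.sum = α.sum := by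
  obtain ⟨L, rfl, rfl⟩ := h
  rw [List.sum_flatten]

/-- For words with positive letters, refinement is containment of the sets of partial sums. -/
theorem refines_iff_prefix {β α : List ℕ} (hβ : ∀ x ∈ β, x ≠ 0) :
    Refines β α ↔ β.sum = α.sum ∧ ∀ p, p <+: α → ∃ q, q <+: β ∧ q.sum = p.sum := by
  refine ⟨fun h => ⟨h.sum_eq, ?_⟩, ?_⟩
  · obtain ⟨L, rfl, rfl⟩ := h
    intro p hp
    rw [List.prefix_iff_eq_take] at hp
    refine ⟨(L.take p.length).flatten, ?_, ?_⟩
    · conv_rhs => rw [← List.take_append_drop p.length L, List.flatten_append]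
      exact List.prefix_append _ _
    · rw [List.sum_flatten, List.map_take, ← hp]
  · induction α generalizing β with
    | nil =>
      rintro ⟨h, -⟩
      have : β = [] := by
        rw [List.eq_nil_iff_forall_not_mem]
        intro x hx
        exact hβ x hx (List.sum_eq_zero_iff.mp (by simpa using h) x hx)
      exact ⟨[], by simp [this]⟩
    | cons x α ih =>
      rintro ⟨h, hp⟩
      obtain ⟨q, ⟨β', rfl⟩, hq⟩ := hp [x] ⟨α, rfl⟩
      simp only [List.sum_cons, List.sum_nil, List.sum_append] at h hq
      obtain ⟨L, hL, hL'⟩ := ih (β := β') (fun y hy => hβ y (by simp [hy])) ⟨by omega, by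
        intro p hpα
        obtain ⟨s, hs, hsum⟩ := hp (x :: p) (List.cons_prefix_cons.mpr ⟨rfl, hpα⟩)
        rw [List.sum_cons] at hsum
        rcases List.prefix_or_prefix_of_prefix hs (List.prefix_append q β') with ⟨t, rfl⟩ | ⟨r, rfl⟩
        · rw [List.sum_append] at hq
          exact ⟨[], List.nil_prefix, by simp only [List.sum_nil]; omega⟩
        · rw [List.sum_append] at hsum
          exact ⟨r, (List.prefix_append_right_inj q).mp hs, by omega⟩⟩
      exact ⟨q :: L, by simp [hL], by simp [hL', hq]⟩

theorem sum_filter_ne_zero (l : List ℕ) : (l.filter (fun x => x ≠ 0)).sum = l.sum := by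
  induction l with
  | nil => rfl
  | cons x l ih => by_cases hx : x = 0 <;> simp_all

theorem exists_prefix_flat_iff (a : Fin n → ℕ) (s : ℕ) :
    (∃ p, p <+: flat a ∧ p.sum = s) ↔ ∃ j ≤ n, psum a j = s := by
  constructor
  · rintro ⟨p, ⟨t, ht⟩, rfl⟩
    obtain ⟨l₁, l₂, h, rfl, -⟩ := List.filter_eq_append_iff.mp ht.symm
    refine ⟨l₁.length, ?_, ?_⟩
    · have := congrArg List.length h
      simp only [List.length_ofFn, List.length_append] at this
      omega
    · rw [sum_filter_ne_zero, psum_eq_sum_take, h, List.take_left]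
  · rintro ⟨j, -, rfl⟩
    exact ⟨((List.ofFn a).take j).filter (fun x => x ≠ 0), (List.take_prefix _ _).filter _, by
      rw [sum_filter_ne_zero, psum_eq_sum_take]⟩

theorem refines_flat_iff {a b : Fin n → ℕ} :
    Refines (flat b) (flat a) ↔
      psum b n = psum a n ∧ ∀ j ≤ n, ∃ k ≤ n, psum b k = psum a j := by
  have hsum : ∀ c : Fin n → ℕ, (flat c).sum = psum c n := fun c => by
    rw [flat, sum_filter_ne_zero, List.sum_ofFn, psum_length]
  rw [refines_iff_prefix fun x hx => by simpa using (List.mem_filter.mp hx).2, hsum, hsum]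
  refine and_congr_right fun _ => ⟨fun h j hj => ?_, fun h p hp => ?_⟩
  · obtain ⟨p, hp, hpj⟩ := (exists_prefix_flat_iff a (psum a j)).mpr ⟨j, hj, rfl⟩
    rw [← hpj]
    exact (exists_prefix_flat_iff b _).mp (h p hp)
  · obtain ⟨j, hj, hpj⟩ := (exists_prefix_flat_iff a p.sum).mp ⟨p, hp, rfl⟩
    rw [← hpj]
    exact (exists_prefix_flat_iff b _).mpr (h j hj)

end PartialSums

/-! ### Contents of sequences -/

section Content

variable {ι : Type*} {n d : ℕ}

/-- The weak composition counting the indices in `O` at which `γ` takes each value. -/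
noncomputable def contentOn (O : Finset ι) (γ : ι → Fin n) : Fin n → ℕ :=
  fun j => (O.filter fun i => γ i = j).card

theorem psum_contentOn (O : Finset ι) (γ : ι → Fin n) (j : ℕ) :
    psum (contentOn O γ) j = (O.filter fun i => (γ i : ℕ) < j).card := by
  rw [psum, Finset.card_eq_sum_card_fiberwise (f := γ)
    (t := Finset.univ.filter fun k : Fin n => (k : ℕ) < j)]
  · refine Finset.sum_congr rfl fun k hk => ?_
    rw [contentOn, Finset.filter_filter]
    congr 1
    ext i
    simp only [Finset.mem_filter, Finset.mem_univ, true_and] at hk ⊢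
    constructor
    · rintro ⟨hi, rfl⟩
      exact ⟨hi, hk, rfl⟩
    · rintro ⟨hi, -, rfl⟩
      exact ⟨hi, rfl⟩
  · intro i hi
    simpa using (Finset.mem_filter.mp hi).2

/-- Dominance between contents of sorted sequences is pointwise comparison. -/
theorem dominates_contentOn_iff [LinearOrder ι] {O : Finset ι} {γ : ι → Fin n} {f : ι → ℕ}
    (hγ : MonotoneOn γ O) (hf : MonotoneOn f O) {a : Fin n → ℕ}
    (ha : ∀ j ≤ n, psum a j = (O.filter fun i => f i < j).card) :
    Dominates (contentOn O γ) a ↔ ∀ i ∈ O, (γ i : ℕ) ≤ f i := by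
  constructor
  · intro h i hi
    by_contra! hlt
    have hj : f i + 1 ≤ n := by omega
    have h := h ⟨f i + 1, by omega⟩
    rw [psum_contentOn, ha _ hj] at h
    refine absurd h (not_le.mpr (Finset.card_lt_card ?_))
    refine Finset.ssubset_iff_subset_ne.mpr ⟨fun k hk => ?_, fun heq => ?_⟩
    · rw [Finset.mem_filter] at hk ⊢
      refine ⟨hk.1, ?_⟩
      rcases le_total i k with hik | hki
      · have := Fin.le_def.mp (hγ hi hk.1 hik)
        have := hk.2
        simp only at this
        omega
      · have := hf hk.1 hi hki
        omega
    · have : i ∈ O.filter fun k => (γ k : ℕ) < f i + 1 := by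
        rw [heq, Finset.mem_filter]
        exact ⟨hi, by omega⟩
      have := (Finset.mem_filter.mp this).2
      omega
  · intro h j
    rw [psum_contentOn, ha _ (by omega)]
    refine Finset.card_le_card fun k hk => ?_
    rw [Finset.mem_filter] at hk ⊢
    exact ⟨hk.1, (h k hk.1).trans_lt hk.2⟩

/-- The content of a sequence. -/
noncomputable abbrev content [Fintype ι] (γ : ι → Fin n) : Fin n → ℕ :=
  contentOn Finset.univ γ

theorem val_lt_iff_lt_psum_content {f : Fin d → Fin n} (hf : Monotone f) (i : Fin d) (j : ℕ) :
    (f i : ℕ) < j ↔ (i : ℕ) < psum (content f) j := by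
  rw [psum_contentOn]
  constructor
  · intro h
    have : Finset.Iic i ⊆ Finset.univ.filter fun k => (f k : ℕ) < j := fun k hk => by
      have := Fin.le_def.mp (hf (Finset.mem_Iic.mp hk))
      simp only [Finset.mem_filter, Finset.mem_univ, true_and]
      omega
    have := Finset.card_le_card this
    rw [Fin.card_Iic] at this
    omega
  · intro h
    by_contra! hj
    have : (Finset.univ.filter fun k => (f k : ℕ) < j) ⊆ Finset.Iio i := fun k hk => by
      rw [Finset.mem_Iio]
      by_contra! hik
      have := Fin.le_def.mp (hf hik)
      have := (Finset.mem_filter.mp hk).2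
      omega
    have := Finset.card_le_card this
    rw [Fin.card_Iio] at this
    omega

theorem sum_content (f : Fin d → Fin n) : ∑ j, content f j = d := by
  rw [← psum_length, psum_contentOn, Finset.filter_true_of_mem fun i _ => (f i).isLt,
    Finset.card_fin]

theorem content_injective {f g : Fin d → Fin n} (hf : Monotone f) (hg : Monotone g)
    (h : content f = content g) : f = g := by
  funext i
  refine Fin.ext (eq_of_forall_gt_iff fun j => ?_)
  rw [val_lt_iff_lt_psum_content hf, val_lt_iff_lt_psum_content hg, h]

theorem exists_monotone_content_eq (b : Fin n → ℕ) (hb : ∑ j, b j = d) :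
    ∃ γ : Fin d → Fin n, Monotone γ ∧ content γ = b := by
  rw [← psum_length] at hb
  have hex : ∀ i : Fin d, ∃ j, (i : ℕ) < psum b (j + 1) := fun i =>
    ⟨n, (i.isLt.trans_eq hb.symm).trans_le (psum_mono b (Nat.le_succ n))⟩
  have key : ∀ (i : Fin d) (j : ℕ), Nat.find (hex i) < j ↔ (i : ℕ) < psum b j := by
    intro i j
    constructor
    · intro h
      exact (Nat.find_spec (hex i)).trans_le (psum_mono b h)
    · intro h
      cases j with
      | zero => simp [psum_zero] at h
      | succ j => exact Nat.lt_succ_of_le (Nat.find_min' (hex i) h)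
  refine ⟨fun i => ⟨Nat.find (hex i), (key i n).mpr (i.isLt.trans_eq hb.symm)⟩, ?_, ?_⟩
  · intro i k hik
    rw [Fin.mk_le_mk, ← Nat.lt_succ_iff, key]
    exact (Fin.le_def.mp hik).trans_lt ((key k _).mp (Nat.lt_succ_self _))
  · refine psum_ext fun j hj => ?_
    rw [psum_contentOn]
    simp only [key]
    rw [Fin.card_filter_val_lt, ← hb]
    exact min_eq_right (psum_mono b hj)

theorem refines_content_iff {f g : Fin d → Fin n} (hf : Monotone f) (hg : Monotone g) :
    Refines (flat (content g)) (flat (content f)) ↔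
      ∀ i k : Fin d, (i : ℕ) + 1 = k → f i < f k → g i < g k := by
  have hn : ∀ h : Fin d → Fin n, psum (content h) n = d := fun h => by
    rw [psum_length, sum_content]
  rw [refines_flat_iff, hn, hn]
  simp only [true_and]
  constructor
  · intro h i k hik hlt
    obtain ⟨j, hj, hjk⟩ := h (f k) (f k).isLt.le
    have h₁ := (val_lt_iff_lt_psum_content hf i (f k)).mp hlt
    have h₂ := (val_lt_iff_lt_psum_content hf k (f k)).not.mp (lt_irrefl _)
    have h₃ := (val_lt_iff_lt_psum_content hg i j).mpr (by omega)
    have h₄ := (val_lt_iff_lt_psum_content hg k j).not.mpr (by omega)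
    exact Fin.lt_def.mpr (by omega)
  · intro h j hj
    have hle : psum (content f) j ≤ d := (psum_mono _ hj).trans_eq (hn f)
    rcases Nat.eq_zero_or_pos (psum (content f) j) with h0 | hpos
    · exact ⟨0, Nat.zero_le _, by rw [h0, psum_zero]⟩
    rcases hle.eq_or_lt with hd | hd
    · exact ⟨n, le_rfl, by rw [hd, hn]⟩
    obtain ⟨i, hip⟩ : ∃ i : Fin d, (i : ℕ) + 1 = psum (content f) j :=
      ⟨⟨psum (content f) j - 1, by omega⟩, Nat.sub_add_cancel hpos⟩
    obtain ⟨k, hkp⟩ : ∃ k : Fin d, (k : ℕ) = psum (content f) j := ⟨⟨_, hd⟩, rfl⟩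
    have hi := (val_lt_iff_lt_psum_content hf i j).mpr (by omega)
    have hk := (val_lt_iff_lt_psum_content hf k j).not.mpr (by omega)
    have hlt := h i k (by omega) (Fin.lt_def.mpr (by omega))
    refine ⟨g k, (g k).isLt.le, ?_⟩
    have h₁ := (val_lt_iff_lt_psum_content hg i (g k)).mp hlt
    have h₂ := (val_lt_iff_lt_psum_content hg k (g k)).not.mp (lt_irrefl _)
    omega

theorem dominates_content_iff {γ f : Fin d → Fin n} (hγ : Monotone γ) (hf : Monotone f) :
    Dominates (content γ) (content f) ↔ γ ≤ f := by
  rw [dominates_contentOn_iff (f := fun i => (f i : ℕ)) (hγ.monotoneOn _)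
    (fun i _ k _ hik => Fin.le_def.mp (hf hik)) fun j _ => psum_contentOn _ _ _]
  exact ⟨fun h i => Fin.le_def.mpr (h i (Finset.mem_univ i)), fun h i _ => Fin.le_def.mp (h i)⟩

theorem slideF_content {f : Fin d → Fin n} (hf : Monotone f) :
    slideF (content f) = ∑ γ ∈ (Finset.univ : Finset (Fin d → Fin n)).filter
      (fun γ => Monotone γ ∧ γ ≤ f ∧ ∀ i k : Fin d, (i : ℕ) + 1 = k → f i < f k → γ i < γ k),
      MvPolynomial.monomial (Finsupp.equivFunOnFinite.symm (content γ)) 1 := by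
  rw [slideF]
  symm
  refine Finset.sum_nbij (fun γ => content γ) ?_ ?_ ?_ fun _ _ => rfl
  · intro γ hγ
    obtain ⟨hm, hle, hs⟩ := (Finset.mem_filter.mp hγ).2
    refine Finset.mem_filter.mpr ⟨?_, (dominates_content_iff hm hf).mpr hle,
      (refines_content_iff hf hm).mpr hs⟩
    rw [wcFinset, Fintype.mem_piFinset, sum_content]
    intro j
    rw [Finset.mem_range, Nat.lt_succ_iff]
    exact (Finset.single_le_sum (fun _ _ => Nat.zero_le _) (Finset.mem_univ j)).trans_eq
      (sum_content γ)
  · intro γ hγ γ' hγ' h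
    exact content_injective (Finset.mem_filter.mp hγ).2.1 (Finset.mem_filter.mp hγ').2.1 h
  · intro b hb
    obtain ⟨-, hb, hr⟩ := Finset.mem_filter.mp hb
    have hd : ∑ j, b j = d := by
      rw [← psum_length, (refines_flat_iff.mp hr).1, psum_length, sum_content]
    obtain ⟨γ, hγ, rfl⟩ := exists_monotone_content_eq b hd
    exact ⟨γ, Finset.mem_coe.mpr (Finset.mem_filter.mpr ⟨Finset.mem_univ _, hγ,
      (dominates_content_iff hγ hf).mp hb, (refines_content_iff hf hγ).mp hr⟩), rfl⟩

end Content

/-! ### Linear independence of the fundamental slide polynomials -/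

section LinearIndependence

variable {n : ℕ}

theorem coeff_slideF (a b : Fin n → ℕ) :
    MvPolynomial.coeff (Finsupp.equivFunOnFinite.symm b) (slideF a) =
      if b ∈ (wcFinset n (∑ i, a i)).filter
        (fun b => Dominates b a ∧ Refines (flat b) (flat a)) then 1 else 0 := by
  rw [slideF, MvPolynomial.coeff_sum, ← Finset.sum_ite_eq' _ b fun _ => (1 : ℤ)]
  refine Finset.sum_congr rfl fun c _ => ?_
  rw [MvPolynomial.coeff_monomial]
  simp only [EmbeddingLike.apply_eq_iff_eq]

theorem coeff_slideF_self (a : Fin n → ℕ) :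
    MvPolynomial.coeff (Finsupp.equivFunOnFinite.symm a) (slideF a) = 1 := by
  rw [coeff_slideF, if_pos]
  refine Finset.mem_filter.mpr ⟨?_, fun _ => le_rfl, refines_flat_iff.mpr
    ⟨rfl, fun j hj => ⟨j, hj, rfl⟩⟩⟩
  rw [wcFinset, Fintype.mem_piFinset]
  intro j
  rw [Finset.mem_range, Nat.lt_succ_iff]
  exact Finset.single_le_sum (fun _ _ => Nat.zero_le _) (Finset.mem_univ j)

theorem dominates_of_coeff_slideF_ne_zero {a b : Fin n → ℕ}
    (h : MvPolynomial.coeff (Finsupp.equivFunOnFinite.symm b) (slideF a) ≠ 0) :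
    Dominates b a := by
  rw [coeff_slideF] at h
  exact (Finset.mem_filter.mp (ite_ne_right_iff.mp h).1).2.1

theorem linearIndependent_slideF :
    LinearIndependent ℤ (slideF : (Fin n → ℕ) → MvPolynomial (Fin n) ℤ) := by
  rw [linearIndependent_iff]
  intro l hl
  by_contra hne
  obtain ⟨a, ha, hmin⟩ := Finset.exists_min_image l.support
    (fun a => ∑ j : Fin (n + 1), psum a j) (Finsupp.support_nonempty_iff.mpr hne)
  refine Finsupp.mem_support_iff.mp ha ?_
  have hcoeff := congrArg (MvPolynomial.coeff (Finsupp.equivFunOnFinite.symm a)) hl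
  rw [Finsupp.linearCombination_apply, Finsupp.sum, MvPolynomial.coeff_sum,
    MvPolynomial.coeff_zero, Finset.sum_eq_single a] at hcoeff
  · rwa [MvPolynomial.coeff_smul, coeff_slideF_self, smul_eq_mul, mul_one] at hcoeff
  · intro b hb hba
    rw [MvPolynomial.coeff_smul]
    by_contra h
    have hab := dominates_of_coeff_slideF_ne_zero (right_ne_zero_of_smul h)
    have heq := (Finset.sum_eq_sum_iff_of_le fun j _ => hab j).mp
      (le_antisymm (Finset.sum_le_sum fun j _ => hab j) (hmin b hb))
    exact hba (Dominates.antisymm (fun j => (heq j (Finset.mem_univ _)).ge) hab)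
  · exact fun h => absurd ha h

end LinearIndependence

/-! ### Compatible sequences -/

section Compat

variable {α : Type*} [LinearOrder α] {n d : ℕ} {b : Fin d → ℕ} {w : Fin d → α}

/-- A sequence `γ` of values is compatible with the word `w` and the bounds `b` if it is weakly
increasing, strictly so between letters forming a descent of `w`, and is bounded by `b`. -/
def Compat (b : Fin d → ℕ) (w : Fin d → α) (γ : Fin d → Fin n) : Prop :=
  (∀ i k, i < k → γ i < γ k ∨ γ i = γ k ∧ w i ≤ w k) ∧ ∀ i, (γ i : ℕ) ≤ b i

theorem Compat.monotone {γ : Fin d → Fin n} (h : Compat b w γ) : Monotone γ := fun i k hik => by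
  rcases hik.eq_or_lt with rfl | hik
  · exact le_rfl
  · exact (h.1 i k hik).elim le_of_lt fun h => h.1.le

theorem Compat.sup {γ δ : Fin d → Fin n} (hγ : Compat b w γ) (hδ : Compat b w δ) :
    Compat b w (γ ⊔ δ) := by
  refine ⟨fun i k hik => ?_, fun i => ?_⟩
  · by_cases hw : w i ≤ w k
    · rcases (sup_le_sup (hγ.monotone hik.le) (hδ.monotone hik.le)).lt_or_eq with h | h
      · exact Or.inl h
      · exact Or.inr ⟨h, hw⟩
    · have h₁ := (hγ.1 i k hik).resolve_right fun h => hw h.2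
      have h₂ := (hδ.1 i k hik).resolve_right fun h => hw h.2
      exact Or.inl (max_lt_max h₁ h₂)
  · rcases le_total (γ i) (δ i) with h | h
    · simpa [sup_eq_right.mpr h] using hδ.2 i
    · simpa [sup_eq_left.mpr h] using hγ.2 i

theorem exists_isGreatest_compat {γ : Fin d → Fin n} (hγ : Compat b w γ) :
    ∃ f : Fin d → Fin n, IsGreatest {γ | Compat b w γ} f := by
  obtain ⟨f, hf⟩ := (Set.toFinite {γ : Fin d → Fin n | Compat b w γ}).exists_maximal ⟨γ, hγ⟩
  exact ⟨f, hf.prop, fun δ hδ => le_sup_right.trans (hf.le_of_ge (hf.prop.sup hδ) le_sup_left)⟩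

theorem Compat.update {γ : Fin d → Fin n} (hγ : Compat b w γ) {i : Fin d} {x : Fin n}
    (hx : γ i ≤ x) (hxb : (x : ℕ) ≤ b i)
    (hnext : ∀ k : Fin d, (i : ℕ) + 1 = k → x < γ k ∨ x = γ k ∧ w i ≤ w k) :
    Compat b w (Function.update γ i x) := by
  refine ⟨fun s t hst => ?_, fun s => ?_⟩
  · rcases eq_or_ne t i with rfl | ht
    · rw [Function.update_self, Function.update_of_ne hst.ne]
      rcases hγ.1 s t hst with h | ⟨h, hw⟩
      · exact Or.inl (h.trans_le hx)
      · rcases (h.trans_le hx).lt_or_eq with h | h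
        · exact Or.inl h
        · exact Or.inr ⟨h, hw⟩
    · rw [Function.update_of_ne ht]
      rcases eq_or_ne s i with rfl | hs
      · rw [Function.update_self]
        have hk : (s : ℕ) + 1 < d := by omega
        have hnext := hnext ⟨s + 1, hk⟩ rfl
        rcases (Fin.le_def.mpr hst : (⟨s + 1, hk⟩ : Fin d) ≤ t).eq_or_lt with rfl | hlt
        · exact hnext
        · rcases hnext with h | ⟨h, hw⟩
          · exact Or.inl (h.trans_le (hγ.monotone hlt.le))
          · rcases hγ.1 _ t hlt with h' | ⟨h', hw'⟩
            · exact Or.inl (h.trans_lt h')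
            · exact Or.inr ⟨h.trans h', hw.trans hw'⟩
      · rw [Function.update_of_ne hs]
        exact hγ.1 s t hst
  · rcases eq_or_ne s i with rfl | hs
    · rwa [Function.update_self]
    · rw [Function.update_of_ne hs]
      exact hγ.2 s

theorem lt_of_lt_of_adjacent {γ f : Fin d → Fin n} (hγ : Monotone γ) (hf : Monotone f)
    (hs : ∀ i k : Fin d, (i : ℕ) + 1 = k → f i < f k → γ i < γ k) {i k : Fin d} (hik : i ≤ k)
    (hlt : f i < f k) : γ i < γ k := by
  obtain ⟨k, hk⟩ := k
  induction k with
  | zero =>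
    obtain rfl : i = ⟨0, hk⟩ := le_antisymm hik (Fin.le_def.mpr (Nat.zero_le _))
    exact absurd hlt (lt_irrefl _)
  | succ k ih =>
    rcases hik.eq_or_lt with rfl | hik'
    · exact absurd hlt (lt_irrefl _)
    have hle : i ≤ ⟨k, by omega⟩ := Fin.le_def.mpr (Nat.lt_succ_iff.mp (Fin.lt_def.mp hik'))
    have hstep : (⟨k, by omega⟩ : Fin d) ≤ ⟨k + 1, hk⟩ := Fin.le_def.mpr (Nat.le_succ k)
    rcases (hf hstep).lt_or_eq with h | h
    · exact (hγ hle).trans_lt (hs _ _ rfl h)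
    · exact (ih _ hle (hlt.trans_eq h.symm)).trans_le (hγ hstep)

/-- The generating function of compatible sequences is a single fundamental slide polynomial,
determined by the greatest compatible sequence. -/
theorem sum_compat_eq_slideF (hb : ∀ i k, w i ≤ w k → b k ≤ b i) {f : Fin d → Fin n}
    (hf : IsGreatest {γ | Compat b w γ} f) :
    ∑ γ ∈ (Finset.univ : Finset (Fin d → Fin n)).filter (Compat b w),
      MvPolynomial.monomial (Finsupp.equivFunOnFinite.symm (content γ)) 1 =
        slideF (content f) := by
  obtain ⟨hfc, hmax⟩ := hf
  rw [slideF_content hfc.monotone]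
  refine Finset.sum_congr (Finset.filter_congr fun γ _ => ?_) fun _ _ => rfl
  constructor
  · intro hγ
    refine ⟨hγ.monotone, hmax hγ, fun i k hik hlt => ?_⟩
    by_contra hγik
    obtain ⟨-, hw⟩ := (hγ.1 i k (Fin.lt_def.mpr (by omega))).resolve_left hγik
    have hup : Compat b w (Function.update f i (f k)) :=
      hfc.update hlt.le ((hfc.2 k).trans (hb i k hw)) fun k' hk' => by
        obtain rfl : k = k' := Fin.ext (by omega)
        exact Or.inr ⟨rfl, hw⟩
    have := hmax hup i
    rw [Function.update_self] at this
    exact absurd hlt this.not_gt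
  · rintro ⟨hm, hle, hs⟩
    refine ⟨fun i k hik => ?_, fun i => (Fin.le_def.mp (hle i)).trans (hfc.2 i)⟩
    rcases (hm hik.le).lt_or_eq with h | h
    · exact Or.inl h
    · refine Or.inr ⟨h, ?_⟩
      exact ((hfc.1 i k hik).resolve_left fun hlt =>
        (lt_of_lt_of_adjacent hm hfc.monotone hs hik.le hlt).ne h).2

end Compat

/-! ### Products of generating functions of compatible sequences -/

section Product

variable {n : ℕ}

theorem prod_X_eq_monomial_content {d : ℕ} (γ : Fin d → Fin n) :
    ∏ i, (MvPolynomial.X (γ i) : MvPolynomial (Fin n) ℤ) =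
      MvPolynomial.monomial (Finsupp.equivFunOnFinite.symm (content γ)) 1 := by
  simp only [MvPolynomial.X]
  rw [← MvPolynomial.monomial_sum_one]
  refine congrArg (fun e => MvPolynomial.monomial e (1 : ℤ)) (Finsupp.ext fun j => ?_)
  refine (Finsupp.finsetSum_apply _ _ _).trans (Eq.trans ?_
    (Finset.card_filter (fun i => γ i = j) Finset.univ).symm)
  exact Finset.sum_congr rfl fun i _ => Finsupp.single_apply

theorem card_filter_get_eq_countP {α : Type*} (l : List α) (p : α → Prop) [DecidablePred p] :
    ((Finset.univ : Finset (Fin l.length)).filter fun i => p (l.get i)).card =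
      l.countP (fun x => decide (p x)) := by
  induction l with
  | nil => simp
  | cons x l ih =>
    refine (Fin.card_filter_univ_succ (n := l.length) fun i => p ((x :: l).get i)).trans ?_
    rw [List.countP_cons, ← ih]
    simp only [List.get_eq_getElem, List.length_cons, Fin.val_zero, List.getElem_cons_zero,
      Fin.val_succ, List.getElem_cons_succ, decide_eq_true_eq]
    split_ifs <;> rfl

/-- The generating function of the sequences compatible with a word `w` and the bounds `m z` on
the letters `z` of `w`, which are lexicographically bounded below by `p`. -/
noncomputable def compatSum (n : ℕ) (m : ℕ → ℕ) : ℕ ×ₗ ℕ → List ℕ → MvPolynomial (Fin n) ℤ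
  | _, [] => 1
  | p, z :: w => ∑ j : Fin n, if p ≤ toLex ((j : ℕ), z) ∧ (j : ℕ) ≤ m z then
      MvPolynomial.X j * compatSum n m (toLex ((j : ℕ), z)) w else 0

theorem sum_map_compatSum_cons (m : ℕ → ℕ) (p : ℕ ×ₗ ℕ) (z : ℕ) (S : Multiset (List ℕ)) :
    (S.map fun C => compatSum n m p (z :: C)).sum =
      ∑ j : Fin n, if p ≤ toLex ((j : ℕ), z) ∧ (j : ℕ) ≤ m z then
        MvPolynomial.X j * (S.map (compatSum n m (toLex ((j : ℕ), z)))).sum else 0 := by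
  induction S using Multiset.induction with
  | empty => simp
  | cons C S ih =>
    simp only [Multiset.map_cons, Multiset.sum_cons, ih, mul_add]
    rw [compatSum, ← Finset.sum_add_distrib]
    exact Finset.sum_congr rfl fun j _ => by split_ifs <;> simp

/-- Products of generating functions of compatible sequences of words on disjoint alphabets
expand over the shuffles of the words. -/
theorem compatSum_mul_compatSum (m : ℕ → ℕ) (A B : List ℕ) (hAB : ∀ z ∈ A, ∀ y ∈ B, z ≠ y)
    (p : ℕ ×ₗ ℕ) :
    compatSum n m p A * compatSum n m p B = ((shuffles A B).map (compatSum n m p)).sum := by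
  induction A generalizing B p with
  | nil => simp [shuffles, compatSum]
  | cons z A ihA =>
    induction B generalizing p with
    | nil => simp [shuffles, compatSum]
    | cons y B ihB =>
      have hzy : z ≠ y := hAB z (by simp) y (by simp)
      rw [shuffles, Multiset.map_add, Multiset.sum_add, Multiset.map_map, Multiset.map_map]
      simp only [Function.comp_def]
      rw [sum_map_compatSum_cons, sum_map_compatSum_cons]
      simp only [← ihA (y :: B) fun z' hz' => hAB z' (by simp [hz']),
        ← ihB fun z' hz' y' hy' => hAB z' hz' y' (by simp [hy'])]
      simp only [compatSum, Finset.mul_sum, Finset.sum_mul]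
      have hite : ∀ (P : Prop) [Decidable P] (f : Fin n → MvPolynomial (Fin n) ℤ),
          (if P then ∑ i, f i else 0) = ∑ i, if P then f i else 0 := fun P _ f => by
        split_ifs <;> simp
      simp only [hite]
      conv_rhs => rw [Finset.sum_comm, ← Finset.sum_add_distrib]
      refine Finset.sum_congr rfl fun k _ => ?_
      rw [← Finset.sum_add_distrib]
      refine Finset.sum_congr rfl fun j _ => ?_
      have hne : toLex ((j : ℕ), z) ≠ toLex ((k : ℕ), y) := fun h => hzy
        (Prod.ext_iff.mp (toLex.injective h)).2
      rcases hne.lt_or_gt with h | h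
      · have h' := h.not_ge
        by_cases hp : p ≤ toLex ((j : ℕ), z)
        · have hp' := hp.trans h.le
          by_cases hj : (j : ℕ) ≤ m z <;> by_cases hk : (k : ℕ) ≤ m y <;>
            simp [hp, hp', h', h.le, hj, hk]
          ring
        · simp [hp, h']
      · have h' := h.not_ge
        by_cases hp : p ≤ toLex ((k : ℕ), y)
        · have hp' := hp.trans h.le
          by_cases hj : (j : ℕ) ≤ m z <;> by_cases hk : (k : ℕ) ≤ m y <;>
            simp [hp, hp', h', h.le, hj, hk]
          ring
        · simp [hp, h']

theorem compat_cons_iff (m : ℕ → ℕ) (p : ℕ ×ₗ ℕ) (z : ℕ) (w : List ℕ) (j : Fin n)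
    (γ : Fin w.length → Fin n) :
    ((∀ i, p ≤ toLex (((Fin.cons j γ : Fin (w.length + 1) → Fin n) i : ℕ), (z :: w).get i)) ∧
        Compat (fun i => m ((z :: w).get i)) (z :: w).get (Fin.cons j γ)) ↔
      (p ≤ toLex ((j : ℕ), z) ∧ (j : ℕ) ≤ m z) ∧
        (∀ i, toLex ((j : ℕ), z) ≤ toLex ((γ i : ℕ), w.get i)) ∧
          Compat (fun i => m (w.get i)) w.get γ := by
  have hlt : ∀ i, (j < γ i ∨ j = γ i ∧ z ≤ w.get i) ↔
      toLex ((j : ℕ), z) ≤ toLex ((γ i : ℕ), w.get i) := fun i => by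
    rw [Prod.Lex.toLex_le_toLex, Fin.lt_def, Fin.ext_iff]
  simp only [← hlt, Compat]
  constructor
  · rintro ⟨hp, hc, hb⟩
    refine ⟨⟨hp 0, hb 0⟩, fun i => hc 0 i.succ (Fin.succ_pos i), fun i k hik => ?_, fun i => ?_⟩
    · exact hc i.succ k.succ (Fin.succ_lt_succ_iff.mpr hik)
    · exact hb i.succ
  · rintro ⟨⟨hp, hz⟩, hj, hc, hb⟩
    refine ⟨fun i => ?_, fun i k hik => ?_, fun i => ?_⟩
    · cases i using Fin.cases with
      | zero => exact hp
      | succ i => exact hp.trans ((hlt i).mp (hj i))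
    · cases k using Fin.cases with
      | zero => exact absurd hik (Fin.not_lt_zero i)
      | succ k =>
        cases i using Fin.cases with
        | zero => exact hj k
        | succ i => exact hc i k (Fin.succ_lt_succ_iff.mp hik)
    · cases i using Fin.cases with
      | zero => exact hz
      | succ i => exact hb i

theorem compatSum_eq_sum (m : ℕ → ℕ) (p : ℕ ×ₗ ℕ) (w : List ℕ) :
    compatSum n m p w = ∑ γ ∈ (Finset.univ : Finset (Fin w.length → Fin n)).filter
      (fun γ => (∀ i, p ≤ toLex ((γ i : ℕ), w.get i)) ∧
        Compat (fun i => m (w.get i)) w.get γ), ∏ i, MvPolynomial.X (γ i) := by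
  induction w generalizing p with
  | nil =>
    rw [Finset.filter_true_of_mem]
    · simp [compatSum]
    · exact fun γ _ => ⟨fun i => i.elim0, fun i => i.elim0, fun i => i.elim0⟩
  | cons z w ih =>
    rw [compatSum, Finset.sum_filter]
    refine Eq.trans ?_ ((Fin.consEquiv fun _ : Fin (w.length + 1) => Fin n).sum_comp _)
    rw [Fintype.sum_prod_type]
    refine Finset.sum_congr rfl fun j _ => ?_
    rw [ih, Finset.sum_filter, Finset.mul_sum]
    have hite : ∀ (P : Prop) [Decidable P] (f : (Fin w.length → Fin n) → MvPolynomial (Fin n) ℤ),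
        (if P then ∑ i, f i else 0) = ∑ i, if P then f i else 0 := fun P _ f => by
      split_ifs <;> simp
    rw [hite]
    refine Finset.sum_congr rfl fun γ _ => ?_
    have hprod : ∏ i, MvPolynomial.X (R := ℤ) (Fin.consEquiv (fun _ => Fin n) (j, γ) i) =
        MvPolynomial.X j * ∏ i, MvPolynomial.X (γ i) := Fin.prod_univ_succ _
    rw [mul_ite, mul_zero, ← ite_and]
    refine if_congr (compat_cons_iff m p z w j γ).symm hprod.symm rfl

theorem compatSum_bot_eq_sum (m : ℕ → ℕ) (w : List ℕ) :
    compatSum n m (toLex (0, 0)) w = ∑ γ ∈ (Finset.univ : Finset (Fin w.length → Fin n)).filter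
      (Compat (fun i => m (w.get i)) w.get),
        MvPolynomial.monomial (Finsupp.equivFunOnFinite.symm (content γ)) 1 := by
  rw [compatSum_eq_sum]
  refine Finset.sum_congr (Finset.filter_congr fun γ _ => and_iff_right fun i => ?_)
    fun γ _ => prod_X_eq_monomial_content γ
  rw [Prod.Lex.toLex_le_toLex]
  exact (Nat.eq_zero_or_pos (γ i : ℕ)).symm.imp_right fun h => ⟨h.symm, Nat.zero_le _⟩

theorem slideF_eq_compatSum {m : ℕ → ℕ} (hm : Antitone m) {a : Fin n → ℕ} {w : List ℕ}
    (hw : w.Pairwise (· ≥ ·)) (hlt : ∀ z ∈ w, m z < n) (hinj : Set.InjOn m {z | z ∈ w})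
    (ha : ∀ j ≤ n, psum a j = w.countP (fun z => decide (m z < j))) :
    slideF a = compatSum n m (toLex (0, 0)) w := by
  let f : Fin w.length → Fin n := fun i => ⟨m (w.get i), hlt _ (List.get_mem _ _)⟩
  have hf : IsGreatest {γ | Compat (fun i => m (w.get i)) w.get γ} f := by
    refine ⟨⟨fun i k hik => ?_, fun i => le_rfl⟩, fun γ hγ i => Fin.le_def.mpr (hγ.2 i)⟩
    have hge : w.get i ≥ w.get k := List.pairwise_iff_get.mp hw i k hik
    rcases (hm hge).lt_or_eq with h | h
    · exact Or.inl (Fin.lt_def.mpr h)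
    · exact Or.inr ⟨Fin.ext h, (hinj (List.get_mem _ _) (List.get_mem _ _) h).le⟩
  have hfa : content f = a := psum_ext fun j hj => by
    rw [psum_contentOn, ha j hj]
    exact card_filter_get_eq_countP w fun z => m z < j
  rw [compatSum_bot_eq_sum, sum_compat_eq_slideF (fun i k hik => hm hik) hf, hfa]

/-- The position in `{0, …, n - 1}` recorded by a letter of the words of compositions. -/
def letterBound (n z : ℕ) : ℕ := (2 * n - z) / 2

theorem letterBound_antitone (n : ℕ) : Antitone (letterBound n) := fun x y hxy => by
  unfold letterBound
  omega

theorem countP_flatten_replicate (a ℓ : Fin n → ℕ) (m : ℕ → ℕ) (hℓ : ∀ i, m (ℓ i) = i) (j : ℕ) :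
    (List.ofFn fun i => List.replicate (a i) (ℓ i)).flatten.countP (fun z => decide (m z < j)) =
      psum a j := by
  rw [List.countP_flatten, List.map_ofFn, List.sum_ofFn, psum, Finset.sum_filter]
  refine Finset.sum_congr rfl fun i _ => ?_
  rw [Function.comp_apply, List.countP_replicate, hℓ]
  simp

theorem pairwise_flatten_replicate (a ℓ : Fin n → ℕ) (hℓ : Antitone ℓ) :
    (List.ofFn fun i => List.replicate (a i) (ℓ i)).flatten.Pairwise (· ≥ ·) := by
  rw [List.pairwise_flatten]
  constructor
  · intro l hl
    obtain ⟨i, rfl⟩ := (List.mem_ofFn).mp hl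
    exact List.pairwise_replicate.mpr (Or.inr le_rfl)
  · rw [List.pairwise_ofFn]
    intro i k hik x hx y hy
    rw [List.eq_of_mem_replicate hx, List.eq_of_mem_replicate hy]
    exact hℓ hik.le

theorem mem_flatten_replicate {a ℓ : Fin n → ℕ} {z : ℕ}
    (hz : z ∈ (List.ofFn fun i => List.replicate (a i) (ℓ i)).flatten) : ∃ i, z = ℓ i := by
  obtain ⟨l, hl, hz⟩ := List.mem_flatten.mp hz
  obtain ⟨i, rfl⟩ := (List.mem_ofFn).mp hl
  exact ⟨i, List.eq_of_mem_replicate hz⟩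

theorem slideF_eq_compatSum_flatten_replicate (a ℓ : Fin n → ℕ)
    (hℓ : Antitone ℓ) (hb : ∀ i, letterBound n (ℓ i) = i) :
    slideF a = compatSum n (letterBound n) (toLex (0, 0))
      (List.ofFn fun i => List.replicate (a i) (ℓ i)).flatten := by
  refine slideF_eq_compatSum (letterBound_antitone n) (pairwise_flatten_replicate a ℓ hℓ)
    (fun z hz => ?_) (fun z hz y hy h => ?_)
    fun j _ => (countP_flatten_replicate a ℓ _ hb j).symm
  · obtain ⟨i, rfl⟩ := mem_flatten_replicate hz
    exact (hb i).trans_lt i.isLt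
  · obtain ⟨i, rfl⟩ := mem_flatten_replicate hz
    obtain ⟨k, rfl⟩ := mem_flatten_replicate hy
    rw [hb, hb] at h
    rw [Fin.ext h]

theorem letterBound_odd (i : Fin n) : letterBound n (2 * n - 2 * (i : ℕ) - 1) = i := by
  unfold letterBound
  omega

theorem letterBound_even (i : Fin n) : letterBound n (2 * n - 2 * (i : ℕ)) = i := by
  unfold letterBound
  omega

theorem antitone_odd_letter : Antitone fun i : Fin n => 2 * n - 2 * (i : ℕ) - 1 :=
  fun i k hik => by
    have := Fin.le_def.mp hik
    simp only
    omega

theorem antitone_even_letter : Antitone fun i : Fin n => 2 * n - 2 * (i : ℕ) :=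
  fun i k hik => by
    have := Fin.le_def.mp hik
    simp only
    omega

theorem odd_of_mem_wordA {a : Fin n → ℕ} {z : ℕ} (hz : z ∈ wordA a) : z % 2 = 1 := by
  obtain ⟨i, rfl⟩ := mem_flatten_replicate hz
  omega

theorem even_of_mem_wordB {b : Fin n → ℕ} {z : ℕ} (hz : z ∈ wordB b) : z % 2 = 0 := by
  obtain ⟨i, rfl⟩ := mem_flatten_replicate hz
  omega

theorem slideF_mul_slideF_eq_sum_shuffles (a b : Fin n → ℕ) :
    slideF a * slideF b = ((shuffles (wordA a) (wordB b)).map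
      (compatSum n (letterBound n) (toLex (0, 0)))).sum := by
  rw [← compatSum_mul_compatSum _ _ _ fun z hz y hy h => ?_,
    slideF_eq_compatSum_flatten_replicate a _ antitone_odd_letter letterBound_odd,
    slideF_eq_compatSum_flatten_replicate b _ antitone_even_letter letterBound_even]
  · rfl
  · have := odd_of_mem_wordA hz
    have := even_of_mem_wordB hy
    omega

end Product

/-! ### Runs of shuffles and the slide product -/

section Shuffles

theorem filter_of_mem_shuffles (p : ℕ → Bool) {A B C : List ℕ} (hC : C ∈ shuffles A B) :
    (∀ z ∈ A, p z = true) → (∀ z ∈ B, p z = false) → C.filter p = A := by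
  induction A generalizing B C with
  | nil =>
    intro _ hB
    obtain rfl : C = B := by simpa [shuffles] using hC
    simpa using hB
  | cons x A ihA =>
    induction B generalizing C with
    | nil =>
      intro hA _
      obtain rfl : C = x :: A := by simpa [shuffles] using hC
      simpa using hA
    | cons y B ihB =>
      intro hA hB
      rw [shuffles, Multiset.mem_add, Multiset.mem_map, Multiset.mem_map] at hC
      rcases hC with ⟨C, hC, rfl⟩ | ⟨C, hC, rfl⟩
      · rw [List.filter_cons_of_pos (hA x (by simp)),
          ihA hC (fun z hz => hA z (by simp [hz])) hB]
      · rw [List.filter_cons_of_neg (by simp [hB y (by simp)]),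
          ihB hC hA fun z hz => hB z (by simp [hz])]

theorem shuffles_comm (A B : List ℕ) : shuffles A B = shuffles B A := by
  induction A generalizing B with
  | nil => cases B <;> simp [shuffles]
  | cons x A ihA =>
    induction B with
    | nil => simp [shuffles]
    | cons y B ihB =>
      rw [shuffles, shuffles, ihA, ihB, add_comm]

theorem runsWeak_cons_cons (x y : ℕ) (l : List ℕ) : ∃ R Rs, runsWeak (y :: l) = R :: Rs ∧
    runsWeak (x :: y :: l) = if x ≤ y then (x :: R) :: Rs else [x] :: R :: Rs := by
  have hne : runsWeak (y :: l) ≠ [] := by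
    unfold runsWeak
    split
    · split_ifs <;> simp
    · simp
  obtain ⟨R, Rs, h⟩ := List.exists_cons_of_ne_nil hne
  refine ⟨R, Rs, h, ?_⟩
  rw [runsWeak.eq_def]
  simp only [h]

theorem ne_nil_of_mem_runsWeak {l R : List ℕ} (hR : R ∈ runsWeak l) : R ≠ [] := by
  induction l generalizing R with
  | nil => simp [runsWeak] at hR
  | cons x l ih =>
    cases l with
    | nil => simp_all [runsWeak]
    | cons y l =>
      obtain ⟨R', Rs, h, hx⟩ := runsWeak_cons_cons x y l
      rw [hx] at hR
      rw [h] at ih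
      split_ifs at hR <;> rcases List.mem_cons.mp hR with rfl | hR
      · simp
      · exact ih (List.mem_cons_of_mem _ hR)
      · simp
      · exact ih hR

/-- Every position of a word lies in a run; the index of this run is described by its
monotonicity properties and the content of each run. -/
theorem exists_runIndex (C : List ℕ) : ∃ r : Fin C.length → ℕ,
    (∀ h, r ⟨0, h⟩ = 0) ∧
    (∀ i k, i ≤ k → r i ≤ r k ∧ (r i = r k → C.get i ≤ C.get k)) ∧
    (∀ i k, r i < r k → ∃ s t, i ≤ s ∧ s < t ∧ t ≤ k ∧ C.get t < C.get s) ∧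
    ∀ (p : ℕ → Prop) [DecidablePred p] (k : ℕ),
      (Finset.univ.filter fun i => r i = k ∧ p (C.get i)).card =
        ((runsWeak C).getD k []).countP (fun z => decide (p z)) := by
  induction C with
  | nil => exact ⟨fun i => i.elim0, by simp, fun i => i.elim0, fun i => i.elim0, by simp [runsWeak]⟩
  | cons x l ih =>
    cases l with
    | nil =>
      refine ⟨fun _ => 0, by simp, ?_, by simp, fun p _ k => ?_⟩
      · intro i k _
        obtain rfl : i = k := Subsingleton.elim (α := Fin 1) _ _
        simp
      · refine (Fin.card_filter_univ_succ (n := 0)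
          fun i => 0 = k ∧ p (([x] : List ℕ).get i)).trans ?_
        cases k <;> simp [runsWeak, List.countP_cons]
    | cons y l =>
      obtain ⟨r, hr0, hmono, hdes, hcount⟩ := ih
      obtain ⟨R, Rs, hR, hxR⟩ := runsWeak_cons_cons x y l
      rw [hxR]
      rw [hR] at hcount
      have hr0 := hr0 (Nat.succ_pos _)
      split_ifs with hxy
      · refine ⟨(Fin.cons 0 r : Fin ((y :: l).length + 1) → ℕ), fun _ => rfl, fun i k hik => ?_,
          fun i k hik => ?_, fun p _ k => ?_⟩
        · cases i using Fin.cases with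
          | zero =>
            refine ⟨Nat.zero_le _, fun h => ?_⟩
            cases k using Fin.cases with
            | zero => exact le_rfl
            | succ k =>
              exact hxy.trans ((hmono ⟨0, Nat.succ_pos _⟩ k (Fin.le_def.mpr (Nat.zero_le _))).2
                (hr0.trans h))
          | succ i =>
            cases k using Fin.cases with
            | zero => exact absurd hik (not_le.mpr (Fin.succ_pos i))
            | succ k => exact hmono i k (Fin.succ_le_succ_iff.mp hik)
        · cases k using Fin.cases with
          | zero => exact absurd hik (Nat.not_lt_zero _)
          | succ k =>
            have hstep : ∀ i', r i' < r k → i ≤ Fin.succ i' → ∃ s t, i ≤ s ∧ s < t ∧ t ≤ k.succ ∧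
                (x :: y :: l).get t < (x :: y :: l).get s := fun i' h hi => by
              obtain ⟨s, t, h₁, h₂, h₃, h₄⟩ := hdes i' k h
              exact ⟨s.succ, t.succ, hi.trans (Fin.succ_le_succ_iff.mpr h₁),
                Fin.succ_lt_succ_iff.mpr h₂, Fin.succ_le_succ_iff.mpr h₃, h₄⟩
            cases i using Fin.cases with
            | zero => exact hstep ⟨0, Nat.succ_pos _⟩ (hr0.trans_lt hik) (Fin.zero_le _)
            | succ i => exact hstep i hik le_rfl
        · refine (Fin.card_filter_univ_succ (n := (y :: l).length) fun i =>
            (Fin.cons 0 r : Fin ((y :: l).length + 1) → ℕ) i = k ∧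
              p ((x :: y :: l).get i)).trans ?_
          have := hcount p k
          cases k with
          | zero =>
            simp only [List.getD_cons_zero, List.countP_cons] at this ⊢
            rw [← this]
            by_cases hp : p x <;> simp [hp, Nat.add_comm]
          | succ k =>
            simp only [List.getD_cons_succ] at this ⊢
            rw [← this]
            simp
      · refine ⟨(Fin.cons 0 fun i => r i + 1 : Fin ((y :: l).length + 1) → ℕ), fun _ => rfl,
          fun i k hik => ?_, fun i k hik => ?_, fun p _ k => ?_⟩
        · cases k using Fin.cases with
          | zero =>
            obtain rfl : i = 0 := le_antisymm hik (Fin.zero_le _)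
            exact ⟨le_rfl, fun _ => le_rfl⟩
          | succ k =>
            cases i using Fin.cases with
            | zero => exact ⟨Nat.zero_le _, fun h => absurd h (Nat.succ_ne_zero _).symm⟩
            | succ i =>
              have := hmono i k (Fin.succ_le_succ_iff.mp hik)
              exact ⟨Nat.succ_le_succ this.1, fun h => this.2 (Nat.succ_injective h)⟩
        · cases k using Fin.cases with
          | zero => exact absurd hik (Nat.not_lt_zero _)
          | succ k =>
            cases i using Fin.cases with
            | zero =>
              exact ⟨0, Fin.succ ⟨0, Nat.succ_pos _⟩, le_rfl, Fin.succ_pos _,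
                Fin.succ_le_succ_iff.mpr (Fin.le_def.mpr (Nat.zero_le _)), not_le.mp hxy⟩
            | succ i =>
              obtain ⟨s, t, h₁, h₂, h₃, h₄⟩ := hdes i k (Nat.lt_of_succ_lt_succ hik)
              exact ⟨s.succ, t.succ, Fin.succ_le_succ_iff.mpr h₁,
                Fin.succ_lt_succ_iff.mpr h₂, Fin.succ_le_succ_iff.mpr h₃, h₄⟩
        · refine (Fin.card_filter_univ_succ (n := (y :: l).length) fun i =>
            (Fin.cons 0 fun i => r i + 1 : Fin ((y :: l).length + 1) → ℕ) i = k ∧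
              p ((x :: y :: l).get i)).trans ?_
          cases k with
          | zero => by_cases hp : p x <;> simp [hp]
          | succ k =>
            have := hcount p k
            simp only [List.getD_cons_succ] at this ⊢
            rw [← this]
            simp

end Shuffles

/-! ### The slide product expands products of slide polynomials -/

section SlideProduct

variable {n : ℕ}

theorem le_val_of_strictMono {l : ℕ} {ι : Fin l → Fin n} (hι : StrictMono ι) (k : Fin l) :
    (k : ℕ) ≤ ι k := by
  obtain ⟨k, hk⟩ := k
  induction k with
  | zero => exact Nat.zero_le _
  | succ k ih =>
    exact (ih (by omega)).trans_lt (Fin.lt_def.mp (hι (Fin.mk_lt_mk.mpr k.lt_succ_self)))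

theorem dominatesList_of_dominates_spread {α : Type*} {L : List α} (g : α → ℕ)
    {ι : Fin L.length → Fin n} (hι : StrictMono ι) {a : Fin n → ℕ}
    (h : Dominates (spread ι fun k => g (L.get k)) a) : DominatesList (L.map g) a := by
  intro i
  refine (h i).trans ?_
  have hL : L.map g = List.ofFn fun k => g (L.get k) := by
    conv_lhs => rw [← List.ofFn_get L, List.map_ofFn]
    rfl
  rw [hL, List.sum_take_ofFn, psum]
  simp only [spread]
  rw [Finset.sum_comm, Finset.sum_filter]
  refine Finset.sum_le_sum fun k _ => ?_
  rw [Finset.sum_ite_eq]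
  have := le_val_of_strictMono hι k
  simp only [Finset.mem_filter, Finset.mem_univ, true_and]
  split_ifs
  · exact le_rfl
  · omega
  · exact Nat.zero_le _
  · exact le_rfl

theorem spread_card_eq_contentOn {ι' : Type*} [Fintype ι'] {l : ℕ} (ι : Fin l → Fin n)
    (r : ι' → Fin l) (O : Finset ι') :
    spread ι (fun k => (O.filter fun i => r i = k).card) = contentOn O (ι ∘ r) := by
  funext j
  rw [spread, contentOn, Finset.card_eq_sum_card_fiberwise (f := r) (t := Finset.univ)
    fun _ _ => Finset.mem_coe.mpr (Finset.mem_univ _)]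
  refine Finset.sum_congr rfl fun k _ => ?_
  rw [Finset.filter_filter]
  split_ifs with h
  · congr 1
    ext i
    simp only [Finset.mem_filter, Function.comp_apply]
    exact and_congr_right fun _ => ⟨fun hi => ⟨hi ▸ h, hi⟩, And.right⟩
  · refine (Finset.card_eq_zero.mpr (Finset.filter_eq_empty_iff.mpr ?_)).symm
    rintro i - ⟨h₁, rfl⟩
    exact h h₁

/-- Dominance over `a` of the content on the positions of the letters `ℓ i` amounts to the
bounds attached to these letters. -/
theorem dominates_contentOn_letters_iff {C : List ℕ} {p : ℕ → Prop} [DecidablePred p]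
    {a ℓ : Fin n → ℕ} {m : ℕ → ℕ} (hm : Antitone m) (hℓ : Antitone ℓ) (hmℓ : ∀ i, m (ℓ i) = i)
    (hC : C.filter (fun z => decide (p z)) =
      (List.ofFn fun i => List.replicate (a i) (ℓ i)).flatten)
    {γ : Fin C.length → Fin n} (hγ : Monotone γ) :
    Dominates (contentOn (Finset.univ.filter fun i => p (C.get i)) γ) a ↔
      ∀ i, p (C.get i) → (γ i : ℕ) ≤ m (C.get i) := by
  have hpw := pairwise_flatten_replicate a ℓ hℓ
  rw [← hC, List.pairwise_filter, List.pairwise_iff_get] at hpw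
  rw [dominates_contentOn_iff (f := fun i => m (C.get i)) (hγ.monotoneOn _)]
  · simp
  · intro i hi k hk hik
    rcases hik.eq_or_lt with rfl | hik
    · exact le_rfl
    · refine hm (hpw i k hik ?_ ?_)
      · simpa using hi
      · simpa using hk
  · intro j _
    rw [← countP_flatten_replicate a ℓ m hmℓ, ← hC, List.countP_filter, Finset.filter_filter,
      card_filter_get_eq_countP C fun z => p z ∧ m z < j]
    refine List.countP_congr fun z _ => ?_
    simp [and_comm]

theorem isBumpS_iff {a b c : Fin n → ℕ} {C : List ℕ} (hC : C ∈ shuffles (wordA a) (wordB b)) :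
    IsBumpS a b C c ↔ ∃ γ : Fin C.length → Fin n,
      IsGreatest {γ | Compat (fun i => letterBound n (C.get i)) C.get γ} γ ∧ c = content γ := by
  obtain ⟨r₀, -, hmono₀, hdes₀, hcount₀⟩ := exists_runIndex C
  have hlt : ∀ i, r₀ i < (runsWeak C).length := fun i => by
    by_contra! h
    have := hcount₀ (fun _ => True) (r₀ i)
    rw [List.getD_eq_default _ _ h, List.countP_nil, Finset.card_eq_zero,
      Finset.filter_eq_empty_iff] at this
    exact this (Finset.mem_univ i) ⟨rfl, trivial⟩
  obtain ⟨r, rfl⟩ : ∃ r : Fin C.length → Fin (runsWeak C).length, r₀ = fun i => (r i : ℕ) :=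
    ⟨fun i => ⟨r₀ i, hlt i⟩, rfl⟩
  have hr : Monotone r := fun i k hik => Fin.le_def.mpr (hmono₀ i k hik).1
  have hcount : ∀ (p : ℕ → Prop) [DecidablePred p] (k : Fin (runsWeak C).length),
      ((Finset.univ.filter fun i => p (C.get i)).filter fun i => r i = k).card =
        ((runsWeak C).get k).countP (fun z => decide (p z)) := fun p _ k => by
    have := hcount₀ p k
    rw [List.getD_eq_getElem _ _ k.isLt] at this
    rw [List.get_eq_getElem, ← this, Finset.filter_filter]
    congr 1
    ext i
    simp [Fin.ext_iff, and_comm]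
  have hspread : ∀ (p : ℕ → Prop) [DecidablePred p] (ι : Fin (runsWeak C).length → Fin n),
      spread ι (fun k => ((runsWeak C).get k).countP (fun z => decide (p z))) =
        contentOn (Finset.univ.filter fun i => p (C.get i)) (ι ∘ r) := fun p _ ι => by
    rw [← spread_card_eq_contentOn]
    simp only [hcount]
  have hA : ∀ ι : Fin (runsWeak C).length → Fin n, spread ι (runCountA C) =
      contentOn (Finset.univ.filter fun i => C.get i % 2 = 1) (ι ∘ r) := fun ι => by
    rw [← hspread fun z => z % 2 = 1]
    simp only [List.countP_eq_length_filter]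
    rfl
  have hB : ∀ ι : Fin (runsWeak C).length → Fin n, spread ι (runCountB C) =
      contentOn (Finset.univ.filter fun i => C.get i % 2 = 0) (ι ∘ r) := fun ι => by
    rw [← hspread fun z => z % 2 = 0]
    simp only [List.countP_eq_length_filter]
    rfl
  have hL : ∀ ι : Fin (runsWeak C).length → Fin n, spread ι (runLen C) = content (ι ∘ r) :=
    fun ι => by
      have := hspread (fun _ => True) ι
      simp only [decide_true, List.countP_true, Finset.filter_true] at this
      exact this
  have hcompat : ∀ ι : Fin (runsWeak C).length → Fin n, StrictMono ι →
      (Compat (fun i => letterBound n (C.get i)) C.get (ι ∘ r) ↔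
        Dominates (spread ι (runCountA C)) a ∧ Dominates (spread ι (runCountB C)) b) := by
    intro ι hι
    have hγ : Monotone (ι ∘ r) := hι.monotone.comp hr
    rw [hA, hB, dominates_contentOn_letters_iff (p := fun z => z % 2 = 1) (letterBound_antitone n) antitone_odd_letter
      letterBound_odd (filter_of_mem_shuffles _ hC (fun z hz => by simpa using odd_of_mem_wordA hz)
        fun z hz => by simpa using even_of_mem_wordB hz) hγ,
      dominates_contentOn_letters_iff (p := fun z => z % 2 = 0) (letterBound_antitone n) antitone_even_letter
      letterBound_even (filter_of_mem_shuffles _ (shuffles_comm (wordA a) (wordB b) ▸ hC)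
        (fun z hz => by simpa using even_of_mem_wordB hz)
        fun z hz => by simpa using odd_of_mem_wordA hz) hγ]
    constructor
    · exact fun h => ⟨fun i _ => h.2 i, fun i _ => h.2 i⟩
    · refine fun h => ⟨fun i k hik => ?_, fun i => ?_⟩
      · rcases (hr hik.le).eq_or_lt with h | h
        · exact Or.inr ⟨congrArg ι h, (hmono₀ i k hik.le).2 (congrArg Fin.val h)⟩
        · exact Or.inl (hι h)
      · rcases Nat.mod_two_eq_zero_or_one (C.get i) with hi | hi
        · exact h.2 i hi
        · exact h.1 i hi
  have hlast : ∀ k, ∃ t, r t = k ∧ ∀ t', r t' = k → t' ≤ t := fun k => by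
    have hne : (Finset.univ.filter fun i => r i = k).Nonempty := by
      have := hcount (fun _ => True) k
      simp only [decide_true, List.countP_true, Finset.filter_true] at this
      rw [← Finset.card_pos, this, List.length_pos_iff]
      exact ne_nil_of_mem_runsWeak (List.get_mem _ _)
    obtain ⟨t, ht, hmax⟩ := Finset.exists_max_image _ id hne
    exact ⟨t, (Finset.mem_filter.mp ht).2, fun t' ht' => hmax t' (by simpa using ht')⟩
  choose t ht htmax using hlast
  have hround : ∀ γ : Fin C.length → Fin n, Compat (fun i => letterBound n (C.get i)) C.get γ →
      ∃ ι : Fin (runsWeak C).length → Fin n, StrictMono ι ∧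
        Compat (fun i => letterBound n (C.get i)) C.get (ι ∘ r) ∧ γ ≤ ι ∘ r := by
    intro γ hγ
    have hι : StrictMono (γ ∘ t) := fun k k' hk => by
      obtain ⟨x, y, hx, hxy, hy, hlt⟩ := hdes₀ (t k) (t k') (by simpa [ht] using hk)
      have := (hγ.1 x y hxy).resolve_right fun h => not_le.mpr hlt h.2
      exact (hγ.monotone hx).trans_lt (this.trans_le (hγ.monotone hy))
    have hle : ∀ i, i ≤ t (r i) := fun i => htmax (r i) i rfl
    refine ⟨γ ∘ t, hι, ⟨fun i k hik => ?_, fun i => ?_⟩, fun i => hγ.monotone (hle i)⟩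
    · rcases (hr hik.le).eq_or_lt with h | h
      · exact Or.inr ⟨congrArg (γ ∘ t) h, (hmono₀ i k hik.le).2 (congrArg Fin.val h)⟩
      · exact Or.inl (hι h)
    · exact (hγ.2 (t (r i))).trans (letterBound_antitone n
        ((hmono₀ i _ (hle i)).2 (congrArg Fin.val (ht (r i)).symm)))
  have hdom : ∀ ι ι' : Fin (runsWeak C).length → Fin n, StrictMono ι → StrictMono ι' →
      (Dominates (spread ι' (runLen C)) (spread ι (runLen C)) ↔ ι' ∘ r ≤ ι ∘ r) :=
    fun ι ι' hι hι' => by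
      rw [hL, hL, dominates_content_iff (hι'.monotone.comp hr) (hι.monotone.comp hr)]
  constructor
  · rintro ⟨ι, hι, rfl, hιA, hιB, hmin⟩
    refine ⟨ι ∘ r, ⟨(hcompat ι hι).mpr ⟨hιA, hιB⟩, fun γ hγ => ?_⟩, hL ι⟩
    obtain ⟨ι', hι', hc, hle⟩ := hround γ hγ
    have := (hcompat ι' hι').mp hc
    exact hle.trans ((hdom ι ι' hι hι').mp (hmin ι' hι' this.1 this.2))
  · rintro ⟨γ, ⟨hγ, hmax⟩, rfl⟩
    obtain ⟨ι, hι, hc, hle⟩ := hround γ hγ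
    obtain rfl : γ = ι ∘ r := le_antisymm hle (hmax hc)
    have := (hcompat ι hι).mp hc
    refine ⟨ι, hι, (hL ι).symm, this.1, this.2, fun ι' hι' h₁ h₂ => ?_⟩
    rw [← hL, hdom ι ι' hι hι']
    exact hmax ((hcompat ι' hι').mpr ⟨h₁, h₂⟩)

theorem IsBumpS.dominatesList {a b c : Fin n → ℕ} {C : List ℕ} (h : IsBumpS a b C c) :
    DominatesList ((runsWeak C).map fun r => (r.filter (fun z => z % 2 = 1)).length) a ∧
      DominatesList ((runsWeak C).map fun r => (r.filter (fun z => z % 2 = 0)).length) b := by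
  obtain ⟨ι, hι, _, hA, hB, _⟩ := h
  unfold runCountA at hA
  unfold runCountB at hB
  exact ⟨dominatesList_of_dominates_spread _ hι hA, dominatesList_of_dominates_spread _ hι hB⟩

/-- A shuffle contributes the slide polynomial of its bump, or nothing if it has none. -/
theorem exists_linearCombination_eq_compatSum {a b : Fin n → ℕ} {C : List ℕ}
    (hC : C ∈ shuffles (wordA a) (wordB b)) : ∃ φ : (Fin n → ℕ) →₀ ℤ,
      (∀ c, φ c = if IsBumpS a b C c then 1 else 0) ∧
      Finsupp.linearCombination ℤ slideF φ =
        compatSum n (letterBound n) (toLex (0, 0)) C := by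
  rw [compatSum_bot_eq_sum]
  by_cases h : ∃ γ : Fin C.length → Fin n, Compat (fun i => letterBound n (C.get i)) C.get γ
  · obtain ⟨γ, hγ⟩ := h
    obtain ⟨f, hf⟩ := exists_isGreatest_compat hγ
    refine ⟨Finsupp.single (content f) 1, fun c => ?_, ?_⟩
    · have hiff : IsBumpS a b C c ↔ content f = c := by
        rw [isBumpS_iff hC]
        refine ⟨?_, fun h => ⟨f, hf, h.symm⟩⟩
        rintro ⟨g, hg, rfl⟩
        rw [hf.unique hg]
      rw [Finsupp.single_apply]
      simp only [hiff]
    · rw [Finsupp.linearCombination_single, one_smul,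
        sum_compat_eq_slideF (fun i k hik => letterBound_antitone n hik) hf]
  · refine ⟨0, fun c => ?_, ?_⟩
    · rw [Finsupp.coe_zero, Pi.zero_apply, if_neg]
      rw [isBumpS_iff hC]
      rintro ⟨f, hf, -⟩
      exact h ⟨f, hf.1⟩
    · rw [map_zero, Finset.filter_false_of_mem fun γ _ hγ => h ⟨γ, hγ⟩, Finset.sum_empty]

/-- The slide product gives the structure constants of the fundamental slide basis. -/
theorem exists_linearCombination_slideMult (a b : Fin n → ℕ) : ∃ φ : (Fin n → ℕ) →₀ ℤ,
    (∀ c, φ c = slideMult a b c) ∧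
      Finsupp.linearCombination ℤ slideF φ = slideF a * slideF b := by
  rw [slideF_mul_slideF_eq_sum_shuffles]
  unfold slideMult
  suffices h : ∀ S : Multiset (List ℕ), (∀ C ∈ S, C ∈ shuffles (wordA a) (wordB b)) →
      ∃ φ : (Fin n → ℕ) →₀ ℤ, (∀ c, φ c = Multiset.card (S.filter fun C =>
        DominatesList ((runsWeak C).map fun r => (r.filter (fun z => z % 2 = 1)).length) a ∧
        DominatesList ((runsWeak C).map fun r => (r.filter (fun z => z % 2 = 0)).length) b ∧
        IsBumpS a b C c)) ∧ Finsupp.linearCombination ℤ slideF φ =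
          (S.map (compatSum n (letterBound n) (toLex (0, 0)))).sum from h _ fun _ => id
  intro S hsub
  induction S using Multiset.induction with
  | empty => exact ⟨0, by simp, by simp⟩
  | cons C S ih =>
    obtain ⟨φ, hφ, hφS⟩ := ih fun D hD => hsub D (Multiset.mem_cons_of_mem hD)
    obtain ⟨ψ, hψ, hψC⟩ :=
      exists_linearCombination_eq_compatSum (hsub C (Multiset.mem_cons_self C S))
    refine ⟨ψ + φ, fun c => ?_, ?_⟩
    · rw [Finsupp.add_apply, hφ, hψ, Multiset.filter_cons, Multiset.card_add]
      by_cases h : IsBumpS a b C c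
      · rw [if_pos h, if_pos ⟨h.dominatesList.1, h.dominatesList.2, h⟩]
        simp
      · rw [if_neg h, if_neg fun h' => h h'.2.2]
        simp
    · rw [map_add, hφS, hψC, Multiset.map_cons, Multiset.sum_cons]

end SlideProduct

/-! ### Reduced words -/

section ReducedWords

theorem wordPerm_cons (k : ℕ) (l : List ℕ) :
    wordPerm (k :: l) = wordPerm l * Equiv.swap k (k + 1) := by
  simp [wordPerm, List.prod_append]

theorem exists_wordPerm_eq_mul_swap {l : List ℕ} {p q : ℕ} (hpq : p < q)
    (h : wordPerm l q < wordPerm l p) :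
    ∃ l', l'.length + 1 = l.length ∧ wordPerm l' = wordPerm l * Equiv.swap p q := by
  induction l generalizing p q with
  | nil => exact absurd h (not_lt.mpr hpq.le)
  | cons k l ih =>
    rw [wordPerm_cons] at h ⊢
    by_cases hk : p = k ∧ q = k + 1
    · obtain ⟨rfl, rfl⟩ := hk
      exact ⟨l, rfl, by rw [mul_assoc, Equiv.swap_mul_self, mul_one]⟩
    · have hlt : Equiv.swap k (k + 1) p < Equiv.swap k (k + 1) q := by
        simp only [Equiv.swap_apply_def]
        split_ifs <;> omega
      obtain ⟨l', hl', hperm⟩ := ih hlt h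
      refine ⟨k :: l', by simp [← hl'], ?_⟩
      rw [wordPerm_cons, hperm, Equiv.swap_apply_apply, Equiv.swap_inv]
      simp [mul_assoc]

theorem IsReducedWord.tail {k : ℕ} {l : List ℕ} (h : IsReducedWord (k :: l)) :
    IsReducedWord l := fun l' hl' => by
  have := h (k :: l') (by rw [wordPerm_cons, wordPerm_cons, hl'])
  simpa using this

/-- The first letter of a reduced word is a descent of its permutation. -/
theorem IsReducedWord.wordPerm_lt {k : ℕ} {l : List ℕ} (h : IsReducedWord (k :: l)) :
    wordPerm (k :: l) (k + 1) < wordPerm (k :: l) k := by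
  rw [wordPerm_cons, Equiv.Perm.mul_apply, Equiv.Perm.mul_apply, Equiv.swap_apply_left,
    Equiv.swap_apply_right]
  by_contra! hle
  obtain ⟨l', hl', hperm⟩ := exists_wordPerm_eq_mul_swap (Nat.lt_succ_self k)
    (hle.lt_of_ne fun h => by simpa using (wordPerm l).injective h)
  have := h l' (by rw [hperm, wordPerm_cons])
  rw [List.length_cons] at this
  omega

theorem IsReducedWord.isChain_ne {l : List ℕ} (h : IsReducedWord l) : l.IsChain (· ≠ ·) := by
  induction l with
  | nil => exact List.isChain_nil
  | cons k l ih =>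
    cases l with
    | nil => exact List.isChain_singleton _
    | cons m l =>
      refine List.isChain_cons_cons.mpr ⟨?_, ih h.tail⟩
      rintro rfl
      have := h l (by rw [wordPerm_cons, wordPerm_cons, mul_assoc, Equiv.swap_mul_self, mul_one])
      simp at this

theorem IsReducedWord.lt_of_mem {l : List ℕ} (h : IsReducedWord l) {N : ℕ}
    (hN : ∀ i, N ≤ i → wordPerm l i = i) {k : ℕ} (hk : k ∈ l) : k + 1 < N := by
  induction l with
  | nil => simp at hk
  | cons m l ih =>
    have hm : m + 1 < N := by
      by_contra! hle
      have hlt := h.wordPerm_lt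
      have hfix := hN _ (hle.trans (hN (m + 1) hle ▸ hlt).le)
      have := (wordPerm (m :: l)).injective hfix
      rw [hN (m + 1) hle, this] at hlt
      omega
    rcases List.mem_cons.mp hk with rfl | hk
    · exact hm
    · refine ih h.tail (fun i hi => ?_) hk
      have := hN i hi
      rwa [wordPerm_cons, Equiv.Perm.mul_apply,
        Equiv.swap_apply_of_ne_of_ne (by omega) (by omega)] at this

end ReducedWords

/-! ### Pipe dreams as compatible sequences -/

section PipeDreams

/-- The crosses of a pipe dream, in reading order. -/
def readCells (P : Finset (ℕ × ℕ)) : List (ℕ × ℕ) :=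
  ((List.range (P.sup Prod.fst + 1)).reverse).flatMap
    (fun i => ((List.range (P.sup Prod.snd + 1)).filter (fun j => decide ((i, j) ∈ P))).map
      (fun j => (i, j)))

theorem map_readCells (P : Finset (ℕ × ℕ)) :
    (readCells P).map (fun p => p.1 + p.2) = readWord P := by
  simp only [readCells, readWord, List.map_flatMap, List.map_map]
  rfl

theorem mem_readCells {P : Finset (ℕ × ℕ)} {p : ℕ × ℕ} : p ∈ readCells P ↔ p ∈ P := by
  obtain ⟨i, j⟩ := p
  simp only [readCells, List.mem_flatMap, List.mem_reverse, List.mem_range, List.mem_map,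
    List.mem_filter, decide_eq_true_eq, Prod.mk.injEq]
  constructor
  · rintro ⟨i, -, j, ⟨-, h⟩, rfl, rfl⟩
    exact h
  · exact fun h => ⟨i, Nat.lt_succ_of_le (Finset.le_sup (f := Prod.fst) h), j,
      ⟨Nat.lt_succ_of_le (Finset.le_sup (f := Prod.snd) h), h⟩, rfl, rfl⟩

theorem pairwise_readCells (P : Finset (ℕ × ℕ)) :
    (readCells P).Pairwise fun p q => q.1 < p.1 ∨ p.1 = q.1 ∧ p.2 < q.2 := by
  rw [readCells, List.pairwise_flatMap]
  refine ⟨fun i _ => ?_, ?_⟩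
  · rw [List.pairwise_map]
    exact (List.pairwise_lt_range.filter _).imp fun h => Or.inr ⟨rfl, h⟩
  · rw [List.pairwise_reverse]
    refine List.pairwise_lt_range.imp fun h p hp q hq => Or.inl ?_
    obtain ⟨_, -, rfl⟩ := List.mem_map.mp hp
    obtain ⟨_, -, rfl⟩ := List.mem_map.mp hq
    exact h

theorem readCells_eq {P : Finset (ℕ × ℕ)} {L : List (ℕ × ℕ)}
    (hL : L.Pairwise fun p q => q.1 < p.1 ∨ p.1 = q.1 ∧ p.2 < q.2) (hmem : ∀ p, p ∈ L ↔ p ∈ P) :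
    readCells P = L := by
  have hnd : ∀ {L : List (ℕ × ℕ)},
      (L.Pairwise fun p q => q.1 < p.1 ∨ p.1 = q.1 ∧ p.2 < q.2) → L.Nodup := fun h =>
    h.imp fun {p q} h => by
      rintro rfl
      omega
  refine List.Perm.eq_of_pairwise (fun p q _ _ h₁ h₂ => ?_) (pairwise_readCells P) hL
    ((List.perm_ext_iff_of_nodup (hnd (pairwise_readCells P)) (hnd hL)).mpr fun p =>
      mem_readCells.trans (hmem p).symm)
  exact absurd h₂ (by omega)

variable {n d : ℕ}

/-- The sequences of rows of the pipe dreams with reading word `w (d - 1), …, w 0`. -/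
abbrev RowCompat (w : Fin d → ℕ) (γ : Fin d → Fin n) : Prop :=
  Compat w (fun i => OrderDual.toDual (w i)) γ

/-- The pipe dream whose crosses lie in the rows `γ` and record the letters `w`. -/
def cellsOf (w : Fin d → ℕ) (γ : Fin d → Fin n) : Finset (ℕ × ℕ) :=
  Finset.univ.image fun i => ((γ i : ℕ), w i - γ i)

theorem mem_cellsOf {w : Fin d → ℕ} {γ : Fin d → Fin n} {p : ℕ × ℕ} :
    p ∈ cellsOf w γ ↔ ∃ i, ((γ i : ℕ), w i - γ i) = p := by simp [cellsOf]

variable {w : Fin d → ℕ} {γ : Fin d → Fin n}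

theorem Compat.lt_of_eq (hw : ∀ i k : Fin d, (i : ℕ) + 1 = k → w i ≠ w k) (hγ : RowCompat w γ)
    {i k : Fin d} (hik : i < k) (h : γ i = γ k) : w k < w i := by
  have hlt : (i : ℕ) + 1 < d := by have := Fin.lt_def.mp hik; omega
  set s : Fin d := ⟨i + 1, hlt⟩ with hs
  have his : i < s := Fin.lt_def.mpr (Nat.lt_succ_self _)
  have hsk : s ≤ k := Fin.le_def.mpr (Fin.lt_def.mp hik)
  have his' : γ i = γ s :=
    le_antisymm (hγ.monotone his.le) ((hγ.monotone hsk).trans_eq h.symm)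
  have h₁ : w s ≤ w i := ((hγ.1 i s his).resolve_left his'.not_lt).2
  have h₂ : w k ≤ w s := by
    rcases hsk.eq_or_lt with h' | h'
    · rw [h']
    · exact ((hγ.1 s k h').resolve_left (his'.symm.trans h).not_lt).2
  have := hw i s rfl
  omega

theorem readCells_cellsOf (hw : ∀ i k : Fin d, (i : ℕ) + 1 = k → w i ≠ w k)
    (hγ : RowCompat w γ) :
    readCells (cellsOf w γ) = (List.ofFn fun i => ((γ i : ℕ), w i - γ i)).reverse := by
  refine readCells_eq ?_ fun p => ?_
  · rw [List.pairwise_reverse, List.pairwise_ofFn]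
    intro i k hik
    rcases (hγ.monotone hik.le).lt_or_eq with h | h
    · exact Or.inl h
    · refine Or.inr ⟨congrArg Fin.val h.symm, ?_⟩
      have h₁ := hγ.lt_of_eq hw hik h
      have h₂ := hγ.2 k
      simp only [h]
      omega
  · rw [List.mem_reverse, List.mem_ofFn, mem_cellsOf]

theorem readWord_cellsOf (hw : ∀ i k : Fin d, (i : ℕ) + 1 = k → w i ≠ w k)
    (hγ : RowCompat w γ) : readWord (cellsOf w γ) = (List.ofFn w).reverse := by
  rw [← map_readCells, readCells_cellsOf hw hγ, List.map_reverse, List.map_ofFn]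
  congr 2
  funext i
  exact Nat.add_sub_of_le (hγ.2 i)

theorem cellsOf_injOn (hw : ∀ i k : Fin d, (i : ℕ) + 1 = k → w i ≠ w k) :
    Set.InjOn (cellsOf (n := n) w) {γ | RowCompat w γ} := fun γ hγ δ hδ h => by
  have h := congrArg readCells h
  rw [readCells_cellsOf hw hγ, readCells_cellsOf hw hδ, List.reverse_inj, List.ofFn_inj] at h
  funext i
  exact Fin.ext (Prod.ext_iff.mp (congrFun h i)).1

theorem wtFin_cellsOf (hw : ∀ i k : Fin d, (i : ℕ) + 1 = k → w i ≠ w k)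
    (hγ : RowCompat w γ) : wtFin n (cellsOf w γ) = content γ := by
  have hinj : Function.Injective fun i => ((γ i : ℕ), w i - γ i) := by
    have hlt : ∀ i k, i < k → ((γ i : ℕ), w i - γ i) ≠ ((γ k : ℕ), w k - γ k) :=
      fun i k hik h => by
        obtain ⟨h₁, h₂⟩ := Prod.ext_iff.mp h
        have h₃ := hγ.lt_of_eq hw hik (Fin.ext h₁)
        have h₄ := hγ.2 k
        simp only at h₁ h₂
        omega
    intro i k h
    rcases lt_trichotomy i k with hik | hik | hik
    · exact absurd h (hlt i k hik)
    · exact hik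
    · exact absurd h.symm (hlt k i hik)
  funext j
  rw [wtFin, rowWt, cellsOf, Finset.filter_image, Finset.card_image_of_injective _ hinj, content,
    contentOn]
  simp only [Fin.ext_iff]

/-- A pipe dream is recovered from its reading word and the rows of its crosses. -/
theorem exists_eq_cellsOf {P : Finset (ℕ × ℕ)} (hP : ∀ p ∈ P, p.1 < n)
    (hword : readWord P = (List.ofFn w).reverse) :
    ∃ γ : Fin d → Fin n, RowCompat w γ ∧ P = cellsOf w γ := by
  have hlen : (readCells P).reverse.length = d := by
    have := congrArg List.length hword
    rw [← map_readCells] at this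
    simpa using this
  obtain ⟨g, hg⟩ : ∃ g : Fin d → ℕ × ℕ, (readCells P).reverse = List.ofFn g := by
    subst hlen
    exact ⟨(readCells P).reverse.get, (List.ofFn_get _).symm⟩
  have hmem : ∀ p, p ∈ P ↔ ∃ i, g i = p := fun p => by
    rw [← mem_readCells, ← List.mem_reverse, hg, List.mem_ofFn]
  have hsum : ∀ i, (g i).1 + (g i).2 = w i := by
    rw [← map_readCells, ← List.reverse_eq_iff, ← List.map_reverse, hg, List.map_ofFn,
      List.ofFn_inj] at hword
    exact congrFun hword
  have hpw := pairwise_readCells P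
  rw [← List.pairwise_reverse, hg, List.pairwise_ofFn] at hpw
  refine ⟨fun i => ⟨(g i).1, hP _ ((hmem _).mpr ⟨i, rfl⟩)⟩, ⟨fun i k hik => ?_, fun i => ?_⟩, ?_⟩
  · rcases hpw hik with h | h
    · exact Or.inl h
    · refine Or.inr ⟨Fin.ext h.1.symm, ?_⟩
      rw [OrderDual.toDual_le_toDual, ← hsum, ← hsum]
      omega
  · exact (hsum i).symm ▸ Nat.le_add_right _ _
  · ext p
    rw [hmem, mem_cellsOf]
    refine exists_congr fun i => ?_
    rw [← hsum]
    simp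

/-- The quasi-Yamanouchi pipe dreams are those with the greatest rows for their reading word. -/
theorem quasiYamanouchi_cellsOf_iff (hlast : ∀ i : Fin d, (i : ℕ) + 1 = d → w i + 1 < n)
    (hγ : RowCompat w γ) :
    (∀ i j : ℕ, (i, j) ∈ cellsOf w γ → (∀ j', (i, j') ∈ cellsOf w γ → j ≤ j') →
      (j = 0 ∨ ∃ j', (i + 1, j') ∈ cellsOf w γ ∧ j ≤ j')) ↔
      IsGreatest {γ : Fin d → Fin n | RowCompat w γ} γ := by
  have hle : ∀ i k : Fin d, i ≤ k → γ i = γ k → w k ≤ w i := fun i k hik h => by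
    rcases hik.eq_or_lt with rfl | hik
    · exact le_rfl
    · exact ((hγ.1 i k hik).resolve_left h.not_lt).2
  constructor
  · refine fun h => ⟨hγ, fun δ hδ => ?_⟩
    by_contra hnle
    simp only [Pi.le_def, not_forall, not_le] at hnle
    obtain ⟨i, hi, hmax⟩ := Finset.exists_max_image (Finset.univ.filter fun i => γ i < δ i) id
      (by obtain ⟨i, hi⟩ := hnle; exact ⟨i, by simpa using hi⟩)
    have hi : γ i < δ i := by simpa using hi
    have hmax : ∀ k, i < k → δ k ≤ γ k := fun k hik => by
      by_contra! hk
      exact absurd (hmax k (by simpa using hk)) (not_le.mpr hik)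
    have hrow : ∀ k, γ k = γ i → k ≤ i := fun k hk => by
      by_contra! hik
      exact absurd ((hδ.monotone hik.le).trans (hmax k hik)) (by rw [hk]; exact not_le.mpr hi)
    have hδi := hδ.2 i
    have hγδ := Fin.lt_def.mp hi
    rcases h (γ i) (w i - γ i) (mem_cellsOf.mpr ⟨i, rfl⟩) fun j' hj' => by
      obtain ⟨k, hk⟩ := mem_cellsOf.mp hj'
      obtain ⟨h₁, rfl⟩ := Prod.ext_iff.mp hk
      have := hle k i (hrow k (Fin.ext h₁)) (Fin.ext h₁)
      simp only at h₁ ⊢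
      omega with h₀ | ⟨j', hj', hjj'⟩
    · omega
    · obtain ⟨k, hk⟩ := mem_cellsOf.mp hj'
      obtain ⟨h₁, rfl⟩ := Prod.ext_iff.mp hk
      simp only at h₁ hjj'
      have hik : i < k := by
        by_contra! hki
        have := Fin.le_def.mp (hγ.monotone hki)
        omega
      have h₂ := Fin.le_def.mp (hmax k hik)
      have h₃ := Fin.le_def.mp (hδ.monotone hik.le)
      have h₄ : w k ≤ w i :=
        ((hδ.1 i k hik).resolve_left fun h => absurd (Fin.lt_def.mp h) (by omega)).2
      have h₅ := hγ.2 k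
      omega
  · rintro ⟨-, hmax⟩ r j hj hwest
    obtain ⟨i₀, hi₀⟩ := mem_cellsOf.mp hj
    obtain ⟨rfl, rfl⟩ := Prod.mk.inj hi₀
    obtain ⟨i, hi, himax⟩ := Finset.exists_max_image (Finset.univ.filter fun i => γ i = γ i₀) id
      ⟨i₀, by simp⟩
    have hi : γ i = γ i₀ := by simpa using hi
    have himax : ∀ k, i < k → γ i < γ k := fun k hik =>
      (hγ.monotone hik.le).lt_of_ne fun h =>
        absurd (himax k (by simpa using h.symm.trans hi)) (not_le.mpr hik)
    have hji : w i₀ - γ i₀ ≤ w i - γ i := hwest _ (mem_cellsOf.mpr ⟨i, by rw [hi]⟩)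
    by_contra! hcon
    obtain ⟨hne, hnext⟩ := hcon
    have hxb : (γ i : ℕ) + 1 ≤ w i := by omega
    have hxn : (γ i : ℕ) + 1 < n := by
      rcases Nat.lt_or_ge (i + 1) d with hd | hd
      · have := Fin.lt_def.mp (himax ⟨i + 1, hd⟩ (Fin.lt_def.mpr (Nat.lt_succ_self _)))
        omega
      · have := hlast i (by omega)
        omega
    have hupd := hγ.update (i := i) (x := ⟨γ i + 1, hxn⟩) (Fin.le_def.mpr (Nat.le_succ _)) hxb
      fun k hik => by
        have hk := himax k (Fin.lt_def.mpr (by omega))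
        rcases (Nat.succ_le_of_lt (Fin.lt_def.mp hk)).lt_or_eq with h | h
        · exact Or.inl (Fin.lt_def.mpr h)
        · refine Or.inr ⟨Fin.ext h, ?_⟩
          have h₁ := hnext (w k - γ k) (mem_cellsOf.mpr ⟨k, by rw [← hi, ← h]⟩)
          change w k ≤ w i
          omega
    have := Fin.le_def.mp (hmax hupd i)
    rw [Function.update_self] at this
    simp at this

end PipeDreams

/-! ### The slide expansion of Schubert polynomials -/

section Schubert

variable {n : ℕ} {w : Equiv.Perm ℕ}

theorem succ_lt_of_head_letter (hd : ∀ i : ℕ, n ≤ i + 1 → w i < w (i + 1)) {k : ℕ} {l : List ℕ}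
    (hl : wordPerm (k :: l) = w) (hred : IsReducedWord (k :: l)) : k + 1 < n := by
  by_contra! h
  have := hred.wordPerm_lt
  rw [hl] at this
  exact lt_asymm (hd k h) this

theorem IsPD.row_lt (hd : ∀ i : ℕ, n ≤ i + 1 → w i < w (i + 1)) {P : Finset (ℕ × ℕ)}
    (hP : IsPD w P) {p : ℕ × ℕ} (hp : p ∈ P) : p.1 < n := by
  obtain ⟨hperm, hred⟩ := hP
  rw [← map_readCells] at hperm hred
  have hpw := pairwise_readCells P
  have hp := mem_readCells.mpr hp
  cases hL : readCells P with
  | nil => simp [hL] at hp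
  | cons c L =>
    rw [hL] at hperm hred hpw hp
    have hc : c.1 + c.2 + 1 < n := succ_lt_of_head_letter hd hperm hred
    rcases List.mem_cons.mp hp with rfl | hp
    · omega
    · have := (List.pairwise_cons.mp hpw).1 p hp
      omega

theorem finite_setOf_isPD (hw : ∃ N, ∀ i, N ≤ i → w i = i) : {P | IsPD w P}.Finite := by
  obtain ⟨N, hN⟩ := hw
  refine (Finset.finite_toSet (Finset.range N ×ˢ Finset.range N).powerset).subset fun P hP => ?_
  rw [Finset.mem_coe, Finset.mem_powerset]
  intro p hp
  have := hP.2.lt_of_mem (by rwa [hP.1]) (k := p.1 + p.2)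
    (map_readCells P ▸ List.mem_map_of_mem (mem_readCells.mpr hp))
  rw [Finset.mem_product, Finset.mem_range, Finset.mem_range]
  omega

/-- Among the pipe dreams with a fixed reading word, the weights add up to the slide polynomial of
the quasi-Yamanouchi one. -/
theorem sum_isPD_readWord_eq (hd : ∀ i : ℕ, n ≤ i + 1 → w i < w (i + 1))
    {S : Finset (Finset (ℕ × ℕ))} {l : List ℕ} (hS : ∀ P, P ∈ S ↔ IsPD w P ∧ readWord P = l) :
    ∑ P ∈ S, MvPolynomial.monomial (Finsupp.equivFunOnFinite.symm (wtFin n P)) (1 : ℤ) =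
      ∑ P ∈ S.filter (IsQPD w), slideF (wtFin n P) := by
  rcases S.eq_empty_or_nonempty with rfl | ⟨P₀, hP₀⟩
  · simp
  obtain ⟨⟨hperm, hred⟩, hl⟩ := (hS P₀).mp hP₀
  rw [hl] at hperm hred
  obtain ⟨d, x, rfl⟩ : ∃ d, ∃ x : Fin d → ℕ, l = (List.ofFn x).reverse :=
    ⟨_, l.reverse.get, by rw [List.ofFn_get, List.reverse_reverse]⟩
  have hx : ∀ i k : Fin d, (i : ℕ) + 1 = k → x i ≠ x k := fun i k hik h => by
    have := List.isChain_iff_getElem.mp (List.isChain_reverse.mp hred.isChain_ne) i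
      (by rw [List.length_ofFn]; omega)
    simp only [List.getElem_ofFn, hik] at this
    exact this h.symm
  have hlast : ∀ i : Fin d, (i : ℕ) + 1 = d → x i + 1 < n := fun i hi => by
    obtain _ | d := d
    · exact i.elim0
    · obtain rfl : i = Fin.last d := Fin.ext (by simpa using hi)
      rw [List.ofFn_succ', List.concat_eq_append, List.reverse_append, List.reverse_singleton,
        List.singleton_append] at hperm hred
      exact succ_lt_of_head_letter hd hperm hred
  have hmem : ∀ γ : Fin d → Fin n, RowCompat x γ → cellsOf x γ ∈ S := fun γ hγ =>
    (hS _).mpr ⟨by rw [IsPD, readWord_cellsOf hx hγ]; exact ⟨hperm, hred⟩,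
      readWord_cellsOf hx hγ⟩
  have hsurj : ∀ P ∈ S, ∃ γ : Fin d → Fin n, RowCompat x γ ∧ P = cellsOf x γ := fun P hP =>
    exists_eq_cellsOf (fun p hp => ((hS P).mp hP).1.row_lt hd hp) ((hS P).mp hP).2
  have hqpd : ∀ γ : Fin d → Fin n, RowCompat x γ →
      (IsQPD w (cellsOf x γ) ↔ IsGreatest {γ : Fin d → Fin n | RowCompat x γ} γ) := fun γ hγ =>
    (and_iff_right ((hS _).mp (hmem γ hγ)).1).trans (quasiYamanouchi_cellsOf_iff hlast hγ)
  obtain ⟨γ₀, hγ₀, -⟩ := hsurj P₀ hP₀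
  obtain ⟨f, hf⟩ := exists_isGreatest_compat hγ₀
  have hfilter : S.filter (IsQPD w) = {cellsOf x f} := by
    refine Finset.eq_singleton_iff_unique_mem.mpr
      ⟨Finset.mem_filter.mpr ⟨hmem f hf.1, (hqpd f hf.1).mpr hf⟩, fun Q hQ => ?_⟩
    obtain ⟨hQS, hQ⟩ := Finset.mem_filter.mp hQ
    obtain ⟨γ, hγ, rfl⟩ := hsurj Q hQS
    rw [((hqpd γ hγ).mp hQ).unique hf]
  rw [hfilter, Finset.sum_singleton, wtFin_cellsOf hx hf.1,
    ← sum_compat_eq_slideF (fun i k h => OrderDual.toDual_le_toDual.mp h) hf]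
  symm
  refine Finset.sum_nbij (cellsOf x) (fun γ hγ => hmem γ (Finset.mem_filter.mp hγ).2) ?_ ?_ ?_
  · exact (cellsOf_injOn hx).mono fun γ hγ => (Finset.mem_filter.mp hγ).2
  · intro P hP
    obtain ⟨γ, hγ, rfl⟩ := hsurj P hP
    exact ⟨γ, Finset.mem_coe.mpr (Finset.mem_filter.mpr ⟨Finset.mem_univ _, hγ⟩), rfl⟩
  · intro γ hγ
    rw [wtFin_cellsOf hx (Finset.mem_filter.mp hγ).2]

/-- Schubert polynomials are sums of slide polynomials of quasi-Yamanouchi pipe dreams. -/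
theorem exists_schubertPoly_eq_sum (hw : ∃ N, ∀ i, N ≤ i → w i = i)
    (hd : ∀ i : ℕ, n ≤ i + 1 → w i < w (i + 1)) : ∃ F : Finset (Finset (ℕ × ℕ)),
      (∀ Q, Q ∈ F ↔ Q ∈ {Q | IsQPD w Q}) ∧
      SchubertPoly n w = ∑ Q ∈ F, slideF (wtFin n Q) := by
  have hfin := finite_setOf_isPD hw
  refine ⟨hfin.toFinset.filter (IsQPD w), fun Q => ?_, ?_⟩
  · rw [Finset.mem_filter, hfin.mem_toFinset]
    exact and_iff_right_of_imp And.left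
  · rw [SchubertPoly, finsum_mem_eq_finite_toFinset_sum _ hfin, ← Finset.sum_fiberwise_of_maps_to
      (g := readWord) (t := hfin.toFinset.image readWord)
        fun P hP => Finset.mem_image_of_mem _ hP,
      ← Finset.sum_fiberwise_of_maps_to (s := hfin.toFinset.filter (IsQPD w))
      (g := readWord) (t := hfin.toFinset.image readWord)
        fun P hP => Finset.mem_image_of_mem _ (Finset.mem_filter.mp hP).1]
    refine Finset.sum_congr rfl fun l _ => ?_
    rw [sum_isPD_readWord_eq hd (l := l) fun P => by
      rw [Finset.mem_filter, hfin.mem_toFinset]; rfl, Finset.filter_comm]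

end Schubert

/-- the coefficients of the fundamental slide expansion of a product of
Schubert polynomials are `c_{u,v}^a = Σ_{(P,Q) ∈ QPD(u) × QPD(v)} [a ∣ wt(P) ⧢ wt(Q)]`. -/
theorem schubert_LR_rule (n : ℕ) (u v : Equiv.Perm ℕ)
    (hu : ∃ N, ∀ i, N ≤ i → u i = i) (hv : ∃ N, ∀ i, N ≤ i → v i = i)
    (hdu : ∀ i : ℕ, n ≤ i + 1 → u i < u (i + 1))
    (hdv : ∀ i : ℕ, n ≤ i + 1 → v i < v (i + 1))
    (c : (Fin n → ℕ) → ℤ) (hc : {a | c a ≠ 0}.Finite)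
    (hexp : SchubertPoly n u * SchubertPoly n v = ∑ᶠ a : Fin n → ℕ, c a • slideF a) :
    ∀ a : Fin n → ℕ,
      c a = ∑ᶠ P ∈ {P : Finset (ℕ × ℕ) | IsQPD u P},
        ∑ᶠ Q ∈ {Q : Finset (ℕ × ℕ) | IsQPD v Q},
          (slideMult (wtFin n P) (wtFin n Q) a : ℤ) := by

  intro a
  obtain ⟨F, hF, hFu⟩ := exists_schubertPoly_eq_sum hu hdu
  obtain ⟨G, hG, hGv⟩ := exists_schubertPoly_eq_sum hv hdv
  choose φ hφ hφmul using fun P Q => exists_linearCombination_slideMult (wtFin n P) (wtFin n Q)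
  have hlc : Finsupp.linearCombination ℤ slideF (Finsupp.ofSupportFinite c hc) =
      Finsupp.linearCombination ℤ slideF (∑ P ∈ F, ∑ Q ∈ G, φ P Q) := by
    simp only [map_sum, hφmul]
    rw [← Finset.sum_mul_sum, ← hFu, ← hGv, hexp, Finsupp.linearCombination_apply, Finsupp.sum,
      finsum_eq_sum_of_support_subset]
    · rfl
    · intro b hb
      rw [Finset.mem_coe, Finsupp.mem_support_iff]
      exact left_ne_zero_of_smul hb
  have hca := DFunLike.congr_fun (linearIndependent_slideF hlc) a
  rw [Finsupp.finsetSum_apply] at hca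
  refine hca.trans ?_
  have hFset : {P : Finset (ℕ × ℕ) | IsQPD u P} = ↑F := Set.ext fun P => (hF P).symm
  have hGset : {Q : Finset (ℕ × ℕ) | IsQPD v Q} = ↑G := Set.ext fun Q => (hG Q).symm
  rw [hFset, hGset, finsum_mem_coe_finset]
  refine Finset.sum_congr rfl fun P _ => ?_
  rw [finsum_mem_coe_finset, Finsupp.finsetSum_apply]
  exact Finset.sum_congr rfl fun Q _ => hφ P Q a

end SlidePaper
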